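/- Let h be a Brouwer homeomorphism of ℝ² and let L be a Brouwer line for h whose projection to the y-axis is proper and onto, and such that t(L) ⊂ closure D(L), where t(x,y) = (x+1,y) and h commutes with t. Then there exists a Brouwer line L' for h with proper onto projection on the y-axis such that t(L') ⊂ D(L'), i.e. L' ∩ t(L') = ∅ with t(L') on the D-side. -/

import Mathlib

/-!
Write `t` for the unit horizontal translation and `G₀` for the component of the complement of `L`
lying on its left. The hypotheses say that `h⁻¹` maps the closure of `G₀` into `G₀`, while `t⁻¹`
only maps `G₀` into itself, so that `L` may touch `t L` (`exists_left`). To get strict inclusions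
for both maps at once, one builds a continuous function `ψ` such that `ψ z ≥ 0` implies
`ψ (h z) > 0` and `ψ (t z) > 0` (`exists_lyapunov`). Put `P = {ψ ≥ 0}` and choose an open `U ⊇ P`
whose closure `R` is still mapped into `{ψ > 0}` by `h` and by `t`.

Let `G` be an open connected set disjoint from `P`, containing everything far to the left, and
absorbing each connected set which meets it and avoids `R`. Then `f⁻¹ (closure G)`, for `f = h` or
`f = t`, avoids `R`, and it meets `G` because both maps move points a bounded amount over bounded
ranges of heights; hence it lies in `G`. So a line `L'` contained in the boundary of `G` is disjoint
from its images under `h` and `t`.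

To find `G` and `L'` (`core`), the plane is cut into rows of bricks so fine that the bricks meeting
`P` lie in `U`, without points common to four bricks, and `G` is the left component of the
complement of the union of the bricks meeting `P`. Its boundary is made of vertical and horizontal
segments. Each row contains an odd number of vertical boundary edges, and pairing the edges at each
level makes the set of all edges a disjoint union of directed simple paths (`exists_perm`). The
algebraic number of crossings of a given row by all paths is `1`. A closed path contributes `0`, so
some path goes from bottom to top (`comb`), and it is a properly embedded line (`exists_line`).

That such a line separates its left from its right (`Vert.sep`), which is needed to tell that
`h L'` and `h⁻¹ L'` are on different sides and that `t L'` is on the side of `h L'`, follows from a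
winding number computation (`sep_path`).
-/

def IsotopicToId {X : Type*} [TopologicalSpace X] (f : X → X) : Prop :=
  ∃ F : ℝ → X → X, Continuous (fun p : ℝ × X => F p.1 p.2) ∧
    (∀ t : ℝ, ∃ g : Homeomorph X X, ⇑g = F t) ∧ F 0 = id ∧ F 1 = f

def IsProperLine (L : Set (ℝ × ℝ)) : Prop :=
  ∃ γ : ℝ → ℝ × ℝ, Continuous γ ∧ Function.Injective γ ∧
    Filter.Tendsto γ (Filter.cocompact ℝ) (Filter.cocompact (ℝ × ℝ)) ∧ Set.range γ = L

def IsBrouwerLine (h : Homeomorph (ℝ × ℝ) (ℝ × ℝ)) (L : Set (ℝ × ℝ)) : Prop :=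
  IsProperLine L ∧ L ∩ ⇑h '' L = ∅ ∧
  ∀ x ∈ ⇑h '' L, ∀ y ∈ ⇑h.symm '' L,
    connectedComponentIn Lᶜ x ≠ connectedComponentIn Lᶜ y

/-! ### Separation by a curve, by a winding number -/

/-- The points lying to the left of all points of `L` of the same height (vacuously, all points at a
height which `L` does not attain). -/
def leftOf (L : Set (ℝ × ℝ)) : Set (ℝ × ℝ) := {z | ∀ w ∈ L, w.2 = z.2 → z.1 < w.1}

/-- The points lying to the right of all points of `L` of the same height (vacuously, all points at
a height which `L` does not attain). -/
def rightOf (L : Set (ℝ × ℝ)) : Set (ℝ × ℝ) := {z | ∀ w ∈ L, w.2 = z.2 → w.1 < z.1}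

/-- A continuous non-vanishing complex function on the plane has a continuous logarithm. -/
lemma exists_clog (F : ℝ × ℝ → ℂ) (hF : Continuous F) (h0 : ∀ z, F z ≠ 0) :
    ∃ g : ℝ × ℝ → ℂ, Continuous g ∧ ∀ z, Complex.exp (g z) = F z := by
  obtain ⟨g, ⟨-, hg⟩, -⟩ := Complex.isCoveringMapOn_exp.existsUnique_continuousMap_lifts
    (f := ⟨F, hF⟩) (a₀ := (0, 0)) (e₀ := Complex.log (F (0, 0)))
    (by simp [Complex.exp_log (h0 _)]) (by intro z; simpa using h0 z)
  exact ⟨g, g.continuous, fun z => congrFun hg z⟩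

/-- On a connected set, two continuous logarithms of functions with constant ratio `c` differ by a
constant. -/
lemma clog_sub_const {S : Set (ℝ × ℝ)} (hS : IsPreconnected S) {g l : ℝ × ℝ → ℂ}
    (hg : ContinuousOn g S) (hl : ContinuousOn l S)
    {c : ℂ} (h : ∀ z ∈ S, Complex.exp (g z) = c * Complex.exp (l z)) (hc : c ≠ 0)
    {a b : ℝ × ℝ} (ha : a ∈ S) (hb : b ∈ S) : g a - l a = g b - l b := by
  have key : ∀ z ∈ S, ∃ n : ℤ, g z - l z - (g a - l a) = n * (2 * Real.pi * Complex.I) := by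
    intro z hz
    have : Complex.exp (g z - l z) = Complex.exp (g a - l a) := by
      rw [Complex.exp_sub, Complex.exp_sub, h z hz, h a ha]
      field_simp [Complex.exp_ne_zero]
    obtain ⟨n, hn⟩ := Complex.exp_eq_exp_iff_exists_int.1 this
    exact ⟨n, by rw [hn]; ring⟩
  let k : ℝ × ℝ → ℝ := fun z => (g z - l z - (g a - l a)).im / (2 * Real.pi)
  have hk : ContinuousOn k S := by
    refine ContinuousOn.div_const ?_ _
    exact Complex.continuous_im.comp_continuousOn ((hg.sub hl).sub continuousOn_const)
  have hm : Set.MapsTo k S (Set.range ((↑) : ℤ → ℝ)) := by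
    intro z hz
    obtain ⟨n, hn⟩ := key z hz
    refine ⟨n, ?_⟩
    simp only [k, hn]
    have := Real.pi_ne_zero
    simp
  have hconst := hS.constant_of_mapsTo
    Int.isClosedEmbedding_coe_real.isEmbedding.isInducing.isDiscrete_range hk hm ha hb
  obtain ⟨n, hn⟩ := key b hb
  have h0 : k a = 0 := by simp [k]
  have h1 : k b = n := by
    simp only [k, hn]
    have := Real.pi_ne_zero
    simp
  have : (n : ℝ) = 0 := by rw [← h1, ← hconst, h0]
  have : n = 0 := by exact_mod_cast this
  rw [this] at hn
  simp at hn
  linear_combination -hn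

/-- A path `σ` from the left to the right of a curve `γ` meets the curve. Otherwise `γ s - σ u` is a
non-vanishing function on a square, while its argument makes a full turn around the boundary: on
the sides it takes values successively in the lower half plane, off the negative axis, in the upper
half plane, and off the positive axis. -/
lemma sep_path (γ : ℝ → ℝ × ℝ) (hγ : Continuous γ)
    (honto : Prod.snd '' Set.range γ = Set.univ) {x y : ℝ × ℝ}
    (hx : x ∈ leftOf (Set.range γ)) (hy : y ∈ rightOf (Set.range γ))
    (hJ : JoinedIn (Set.range γ)ᶜ x y) : False := by
  obtain ⟨σ, hσ⟩ := hJ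
  have hval : ∀ c : ℝ, ∃ s, (γ s).2 = c := by
    intro c
    have : c ∈ Prod.snd '' Set.range γ := by rw [honto]; trivial
    obtain ⟨_, ⟨s, rfl⟩, h⟩ := this
    exact ⟨s, h⟩
  have hσc : IsCompact (Set.range fun u => (σ u).2) := isCompact_range (by fun_prop)
  obtain ⟨n, hn⟩ := hσc.isBounded.exists_norm_le
  replace hn : ∀ u, |(σ u).2| ≤ n := fun u => hn _ ⟨u, rfl⟩
  obtain ⟨s₀, hs₀⟩ := hval (-n - 1)
  obtain ⟨s₁, hs₁⟩ := hval (n + 1)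
  have hE : ∀ u : ℝ, ∃ v, σ.extend u = σ v := by
    intro u
    have : σ.extend u ∈ Set.range σ.extend := ⟨u, rfl⟩
    rw [Path.extend_range] at this
    obtain ⟨v, hv⟩ := this
    exact ⟨v, hv.symm⟩
  let d : ℝ × ℝ → ℝ × ℝ := fun z => γ (s₀ + (s₁ - s₀) * z.1) - σ.extend z.2
  have hd : Continuous d := by
    have := σ.continuous_extend
    fun_prop
  let F : ℝ × ℝ → ℂ := fun z => ((d z).1 : ℂ) + ((d z).2 : ℂ) * Complex.I
  have hF : Continuous F := by fun_prop
  have hre : ∀ z, (F z).re = (d z).1 := by intro z; simp [F]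
  have him : ∀ z, (F z).im = (d z).2 := by intro z; simp [F]
  have h0 : ∀ z, F z ≠ 0 := by
    intro z hz
    have h1 := hre z
    have h2 := him z
    rw [hz] at h1 h2
    obtain ⟨v, hv⟩ := hE z.2
    apply hσ v
    refine ⟨s₀ + (s₁ - s₀) * z.1, ?_⟩
    rw [← hv]
    have : d z = 0 := Prod.ext h1.symm h2.symm
    exact sub_eq_zero.1 this
  obtain ⟨g, hg, hgF⟩ := exists_clog F hF h0
  -- the four sides of the unit square
  have hbot : ∀ u, (F (0, u)).im < 0 := by
    intro u
    obtain ⟨v, hv⟩ := hE u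
    rw [him]
    simp only [d, hv, Prod.snd_sub, mul_zero, add_zero, hs₀]
    linarith [(abs_le.1 (hn v)).1]
  have htop : ∀ u, 0 < (F (1, u)).im := by
    intro u
    obtain ⟨v, hv⟩ := hE u
    rw [him]
    simp only [d, hv, Prod.snd_sub, mul_one, add_sub_cancel, hs₁]
    linarith [(abs_le.1 (hn v)).2]
  have hleft : ∀ s, F (s, 0) ∈ Complex.slitPlane := by
    intro s
    rw [Complex.mem_slitPlane_iff]
    by_cases hi : (F (s, 0)).im = 0
    · left
      rw [him] at hi
      rw [hre]
      simp only [d, Path.extend_zero, Prod.snd_sub, Prod.fst_sub] at hi ⊢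
      have := hx _ ⟨_, rfl⟩ (sub_eq_zero.1 hi)
      linarith
    · exact Or.inr hi
  have hright : ∀ s, -F (s, 1) ∈ Complex.slitPlane := by
    intro s
    rw [Complex.mem_slitPlane_iff]
    by_cases hi : (F (s, 1)).im = 0
    · left
      rw [him] at hi
      rw [Complex.neg_re, hre]
      simp only [d, Path.extend_one, Prod.snd_sub, Prod.fst_sub] at hi ⊢
      have := hy _ ⟨_, rfl⟩ (sub_eq_zero.1 hi)
      linarith
    · exact Or.inr (by simpa using hi)
  have side : ∀ (S : Set (ℝ × ℝ)), IsPreconnected S → (∀ z ∈ S, F z ∈ Complex.slitPlane) →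
      ∀ a ∈ S, ∀ b ∈ S, g a - Complex.log (F a) = g b - Complex.log (F b) := by
    intro S hS h a ha b hb
    refine clog_sub_const hS hg.continuousOn (hF.continuousOn.clog h) (c := 1) ?_ one_ne_zero ha hb
    intro z _
    rw [hgF, Complex.exp_log (h0 z), one_mul]
  have hline : ∀ c : ℝ, IsPreconnected {z : ℝ × ℝ | z.1 = c} := by
    intro c
    have : {z : ℝ × ℝ | z.1 = c} = {c} ×ˢ Set.univ := by ext z; simp
    rw [this]
    exact isPreconnected_singleton.prod isPreconnected_univ
  have hline' : ∀ c : ℝ, IsPreconnected {z : ℝ × ℝ | z.2 = c} := by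
    intro c
    have : {z : ℝ × ℝ | z.2 = c} = Set.univ ×ˢ {c} := by ext z; simp
    rw [this]
    exact isPreconnected_univ.prod isPreconnected_singleton
  have e1 := side _ (hline 0) (by
    rintro ⟨_, u⟩ rfl; exact Complex.mem_slitPlane_iff.2 (Or.inr (hbot u).ne)) (0, 1) rfl (0, 0) rfl
  have e2 := side _ (hline' 0) (by rintro ⟨s, _⟩ rfl; exact hleft s) (0, 0) rfl (1, 0) rfl
  have e3 := side _ (hline 1) (by
    rintro ⟨_, u⟩ rfl; exact Complex.mem_slitPlane_iff.2 (Or.inr (htop u).ne')) (1, 0) rfl (1, 1) rfl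
  have e4 : g (0, 1) - Complex.log (-F (0, 1)) = g (1, 1) - Complex.log (-F (1, 1)) := by
    refine clog_sub_const (hline' 1) hg.continuousOn (l := fun z => Complex.log (-F z))
      (hF.neg.continuousOn.clog (by rintro ⟨s, _⟩ rfl; exact hright s)) (c := -1) ?_ (by simp) rfl rfl
    intro z _
    rw [hgF, Complex.exp_log (neg_ne_zero.2 (h0 z))]
    ring
  have e5 := congrArg Complex.im (e1.trans (e2.trans e3))
  have e6 := congrArg Complex.im e4
  simp only [Complex.sub_im, Complex.log_im] at e5 e6
  rw [Complex.arg_neg_eq_arg_sub_pi_of_im_pos (htop 1),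
    Complex.arg_neg_eq_arg_add_pi_of_im_neg (hbot 1)] at e6
  linarith [Real.pi_pos]

/-! ### Vertical curves and their two sides -/

/-- A possibly self-intersecting vertical curve: the closed image of a continuous map of `ℝ` which projects onto the
vertical axis, with bounded part over each bounded range of heights. -/
structure Vert (L : Set (ℝ × ℝ)) : Prop where
  closed : IsClosed L
  param : ∃ γ : ℝ → ℝ × ℝ, Continuous γ ∧ Set.range γ = L
  bdd : ∀ n : ℝ, ∃ c, ∀ w ∈ L, |w.2| ≤ n → |w.1| < c
  onto : Prod.snd '' L = Set.univ

/-- `S` contains everything that lies far enough to the left, locally uniformly in the height. -/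
def FarL (S : Set (ℝ × ℝ)) : Prop := ∀ n : ℝ, ∃ c : ℝ, ∀ z : ℝ × ℝ, |z.2| ≤ n → z.1 ≤ c → z ∈ S

/-- `S` contains everything that lies far enough to the right, locally uniformly in the height. -/
def FarR (S : Set (ℝ × ℝ)) : Prop := ∀ n : ℝ, ∃ c : ℝ, ∀ z : ℝ × ℝ, |z.2| ≤ n → c ≤ z.1 → z ∈ S

lemma FarL.mono {S T : Set (ℝ × ℝ)} (h : FarL S) (hST : S ⊆ T) : FarL T := fun n => by
  obtain ⟨c, hc⟩ := h n
  exact ⟨c, fun z h1 h2 => hST (hc z h1 h2)⟩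

lemma FarR.mono {S T : Set (ℝ × ℝ)} (h : FarR S) (hST : S ⊆ T) : FarR T := fun n => by
  obtain ⟨c, hc⟩ := h n
  exact ⟨c, fun z h1 h2 => hST (hc z h1 h2)⟩

lemma FarL.inter {S T : Set (ℝ × ℝ)} (h : FarL S) (h' : FarL T) : FarL (S ∩ T) := fun n => by
  obtain ⟨c, hc⟩ := h n
  obtain ⟨c', hc'⟩ := h' n
  exact ⟨min c c', fun z h1 h2 =>
    ⟨hc z h1 (h2.trans (min_le_left _ _)), hc' z h1 (h2.trans (min_le_right _ _))⟩⟩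

lemma FarR.inter {S T : Set (ℝ × ℝ)} (h : FarR S) (h' : FarR T) : FarR (S ∩ T) := fun n => by
  obtain ⟨c, hc⟩ := h n
  obtain ⟨c', hc'⟩ := h' n
  exact ⟨max c c', fun z h1 h2 =>
    ⟨hc z h1 ((le_max_left _ _).trans h2), hc' z h1 ((le_max_right _ _).trans h2)⟩⟩

lemma FarL.nonempty {S : Set (ℝ × ℝ)} (h : FarL S) : S.Nonempty := by
  obtain ⟨c, hc⟩ := h 0
  exact ⟨(c, 0), hc _ (by simp) le_rfl⟩

lemma FarR.nonempty {S : Set (ℝ × ℝ)} (h : FarR S) : S.Nonempty := by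
  obtain ⟨c, hc⟩ := h 0
  exact ⟨(c, 0), hc _ (by simp) le_rfl⟩

lemma convex_boxL (n c : ℝ) : Convex ℝ {z : ℝ × ℝ | |z.2| ≤ n ∧ z.1 ≤ c} := by
  have : {z : ℝ × ℝ | |z.2| ≤ n ∧ z.1 ≤ c} = Set.Iic c ×ˢ Set.Icc (-n) n := by
    ext z; simp [abs_le]; tauto
  rw [this]
  exact (convex_Iic c).prod (convex_Icc _ _)

lemma convex_boxR (n c : ℝ) : Convex ℝ {z : ℝ × ℝ | |z.2| ≤ n ∧ c ≤ z.1} := by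
  have : {z : ℝ × ℝ | |z.2| ≤ n ∧ c ≤ z.1} = Set.Ici c ×ˢ Set.Icc (-n) n := by
    ext z; simp [abs_le]; tauto
  rw [this]
  exact (convex_Ici c).prod (convex_Icc _ _)

lemma convex_rayL (q : ℝ × ℝ) : Convex ℝ {z : ℝ × ℝ | z.2 = q.2 ∧ z.1 ≤ q.1} := by
  have : {z : ℝ × ℝ | z.2 = q.2 ∧ z.1 ≤ q.1} = Set.Iic q.1 ×ˢ {q.2} := by
    ext z; simp; tauto
  rw [this]
  exact (convex_Iic _).prod (convex_singleton _)

lemma convex_rayR (q : ℝ × ℝ) : Convex ℝ {z : ℝ × ℝ | z.2 = q.2 ∧ q.1 ≤ z.1} := by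
  have : {z : ℝ × ℝ | z.2 = q.2 ∧ q.1 ≤ z.1} = Set.Ici q.1 ×ˢ {q.2} := by
    ext z; simp; tauto
  rw [this]
  exact (convex_Ici _).prod (convex_singleton _)

namespace Vert
variable {L : Set (ℝ × ℝ)}

lemma farL (hL : Vert L) : FarL (leftOf L) := fun n => by
  obtain ⟨c, hc⟩ := hL.bdd n
  refine ⟨-c, fun z h1 h2 w hw h3 => ?_⟩
  have := (abs_lt.1 (hc w hw (by rwa [h3]))).1
  linarith

lemma farR (hL : Vert L) : FarR (rightOf L) := fun n => by
  obtain ⟨c, hc⟩ := hL.bdd n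
  refine ⟨c, fun z h1 h2 w hw h3 => ?_⟩
  have := (abs_lt.1 (hc w hw (by rwa [h3]))).2
  linarith

lemma leftOf_subset (L : Set (ℝ × ℝ)) : leftOf L ⊆ Lᶜ := fun z hz hzL => lt_irrefl _ (hz z hzL rfl)

lemma rightOf_subset (L : Set (ℝ × ℝ)) : rightOf L ⊆ Lᶜ :=
  fun z hz hzL => lt_irrefl _ (hz z hzL rfl)

lemma preconn_leftOf (hL : Vert L) : IsPreconnected (leftOf L) := by
  apply isPreconnected_of_forall_pair
  intro x hx y hy
  obtain ⟨c, hc⟩ := hL.farL (max |x.2| |y.2|)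
  refine ⟨({z | z.2 = x.2 ∧ z.1 ≤ x.1} ∪ {z | |z.2| ≤ max |x.2| |y.2| ∧ z.1 ≤ c}) ∪
    {z | z.2 = y.2 ∧ z.1 ≤ y.1}, ?_, by simp, by simp, ?_⟩
  · rintro z ((h | h) | h)
    · intro w hw h3
      exact lt_of_le_of_lt h.2 (hx w hw (h3.trans h.1))
    · exact hc z h.1 h.2
    · intro w hw h3
      exact lt_of_le_of_lt h.2 (hy w hw (h3.trans h.1))
  · refine IsPreconnected.union (min c y.1, y.2) ?_ ?_ (IsPreconnected.union (min c x.1, x.2) ?_ ?_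
      (convex_rayL _).isPreconnected (convex_boxL _ _).isPreconnected)
      (convex_rayL _).isPreconnected <;> simp

lemma preconn_rightOf (hL : Vert L) : IsPreconnected (rightOf L) := by
  apply isPreconnected_of_forall_pair
  intro x hx y hy
  obtain ⟨c, hc⟩ := hL.farR (max |x.2| |y.2|)
  refine ⟨({z | z.2 = x.2 ∧ x.1 ≤ z.1} ∪ {z | |z.2| ≤ max |x.2| |y.2| ∧ c ≤ z.1}) ∪
    {z | z.2 = y.2 ∧ y.1 ≤ z.1}, ?_, by simp, by simp, ?_⟩
  · rintro z ((h | h) | h)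
    · intro w hw h3
      exact lt_of_lt_of_le (hx w hw (h3.trans h.1)) h.2
    · exact hc z h.1 h.2
    · intro w hw h3
      exact lt_of_lt_of_le (hy w hw (h3.trans h.1)) h.2
  · refine IsPreconnected.union (max c y.1, y.2) ?_ ?_ (IsPreconnected.union (max c x.1, x.2) ?_ ?_
      (convex_rayR _).isPreconnected (convex_boxR _ _).isPreconnected)
      (convex_rayR _).isPreconnected <;> simp

lemma isCompact_slice (hL : Vert L) : IsCompact {x : ℝ | (x, (0 : ℝ)) ∈ L} := by
  obtain ⟨c, hc⟩ := hL.bdd 0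
  refine Metric.isCompact_of_isClosed_isBounded (hL.closed.preimage (by fun_prop)) ?_
  refine Metric.isBounded_Icc (-c) c |>.subset fun x hx => ?_
  exact abs_le.1 (hc (x, 0) hx (by simp)).le

lemma slice_nonempty (hL : Vert L) : {x : ℝ | (x, (0 : ℝ)) ∈ L}.Nonempty := by
  have : (0 : ℝ) ∈ Prod.snd '' L := by rw [hL.onto]; trivial
  obtain ⟨⟨x, _⟩, hx, rfl⟩ := this
  exact ⟨x, hx⟩

/-- The slice of `L` at height `0` has a rightmost point. -/
lemma exists_rightmost (hL : Vert L) :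
    ∃ q ∈ L, ∀ z : ℝ × ℝ, z.2 = q.2 → q.1 < z.1 → z ∈ rightOf L := by
  obtain ⟨x, hx⟩ := hL.isCompact_slice.exists_isGreatest hL.slice_nonempty
  refine ⟨(x, 0), hx.1, ?_⟩
  rintro ⟨a, _⟩ rfl h2 ⟨b, _⟩ hw rfl
  exact (hx.2 hw).trans_lt h2

lemma preconn (hL : Vert L) : IsPreconnected L := by
  obtain ⟨γ, hγ, rfl⟩ := hL.param
  exact isPreconnected_range hγ

/-- A connected set missing `L` cannot meet both sides of `L`. -/
lemma sep (hL : Vert L) {C : Set (ℝ × ℝ)} (hC : IsPreconnected C) (hCL : C ⊆ Lᶜ) {x y : ℝ × ℝ}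
    (hxC : x ∈ C) (hyC : y ∈ C) (hx : x ∈ leftOf L) (hy : y ∈ rightOf L) : False := by
  have hop : IsOpen (connectedComponentIn Lᶜ x) := hL.closed.isOpen_compl.connectedComponentIn
  have hconn : IsConnected (connectedComponentIn Lᶜ x) :=
    isConnected_connectedComponentIn_iff.2 (hCL hxC)
  have hpath := (hop.isConnected_iff_isPathConnected).1 hconn
  have hJ := hpath.joinedIn x (mem_connectedComponentIn (hCL hxC)) y
    (hC.subset_connectedComponentIn hxC hCL hyC)
  obtain ⟨γ, hγ, rfl⟩ := hL.param
  exact sep_path γ hγ hL.onto hx hy (hJ.mono (connectedComponentIn_subset _ _))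

end Vert

/-! ### Edges and their pairing -/

/-- The number of elements of `S` to the left of `x`. -/
noncomputable def idx (S : Finset ℝ) (x : ℝ) : ℕ := (S.filter (· < x)).card

lemma idx_lt {S : Finset ℝ} {x y : ℝ} (hx : x ∈ S) (hxy : x < y) : idx S x < idx S y := by
  refine Finset.card_lt_card ?_
  rw [Finset.ssubset_iff_of_subset
    (fun z hz => by simp only [Finset.mem_filter] at hz ⊢; exact ⟨hz.1, hz.2.trans hxy⟩)]
  exact ⟨x, by simp [hx, hxy], by simp⟩

lemma idx_mono (S : Finset ℝ) {x y : ℝ} (hxy : x ≤ y) : idx S x ≤ idx S y :=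
  Finset.card_le_card fun z hz => by
    simp only [Finset.mem_filter] at hz ⊢; exact ⟨hz.1, hz.2.trans_le hxy⟩

lemma idx_inj {S : Finset ℝ} {x y : ℝ} (hx : x ∈ S) (hy : y ∈ S) (h : idx S x = idx S y) :
    x = y := by
  rcases lt_trichotomy x y with h' | h' | h'
  · exact absurd h (idx_lt hx h').ne
  · exact h'
  · exact absurd h (idx_lt hy h').ne'

lemma idx_lt_card {S : Finset ℝ} {x : ℝ} (hx : x ∈ S) : idx S x < S.card :=
  Finset.card_lt_card (Finset.filter_ssubset.2 ⟨x, hx, lt_irrefl x⟩)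

lemma image_idx (S : Finset ℝ) : S.image (idx S) = Finset.range S.card := by
  refine Finset.eq_of_subset_of_card_le ?_ ?_
  · intro i hi
    obtain ⟨x, hx, rfl⟩ := Finset.mem_image.1 hi
    exact Finset.mem_range.2 (idx_lt_card hx)
  · rw [Finset.card_range, Finset.card_image_of_injOn fun x hx y hy h => idx_inj hx hy h]

lemma exists_idx_eq {S : Finset ℝ} {i : ℕ} (hi : i < S.card) : ∃ x ∈ S, idx S x = i := by
  have : i ∈ S.image (idx S) := by rw [image_idx]; exact Finset.mem_range.2 hi
  simpa using this

lemma idx_union {S T : Finset ℝ} (h : Disjoint S T) (x : ℝ) :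
    idx (S ∪ T) x = idx S x + idx T x := by
  rw [idx, Finset.filter_union, Finset.card_union_of_disjoint]
  · rfl
  · exact Finset.disjoint_filter_filter h

/-- Passing over a point of `S` increases `idx S` by one. -/
lemma idx_succ {S T : Finset ℝ} (hST : S ⊆ T) {x y : ℝ} (hx : x ∈ T)
    (h : idx T y = idx T x + 1) : idx S y = idx S x + if x ∈ S then 1 else 0 := by
  have hxy : x < y := by
    by_contra h'
    have := idx_mono T (not_lt.1 h')
    omega
  have hbet : ∀ z ∈ T, z < y → z ≤ x := by
    intro z hz hzy
    by_contra h'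
    have h1 := idx_lt hx (not_le.1 h')
    have h2 := idx_lt hz hzy
    omega
  have : S.filter (· < y) = S.filter (· < x) ∪ S.filter (· = x) := by
    ext z
    simp only [Finset.mem_filter, Finset.mem_union]
    constructor
    · rintro ⟨h1, h2⟩
      rcases (hbet z (hST h1) h2).lt_or_eq with h3 | h3
      · exact Or.inl ⟨h1, h3⟩
      · exact Or.inr ⟨h1, h3⟩
    · rintro (⟨h1, h2⟩ | ⟨h1, h2⟩)
      · exact ⟨h1, h2.trans hxy⟩
      · exact ⟨h1, h2 ▸ hxy⟩
  rw [idx, this, Finset.card_union_of_disjoint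
    (Finset.disjoint_filter.2 fun z _ h1 h2 => absurd h2 h1.ne), idx, Finset.filter_eq']
  split <;> simp

/-- Signs alternating along a set of odd cardinality, beginning with `+1`, have sum `1`. -/
lemma sum_neg_one_idx {S : Finset ℝ} (h : Odd S.card) :
    ∑ x ∈ S, (-1 : ℤ) ^ idx S x = 1 := by
  rw [← Finset.sum_image (f := fun i => (-1 : ℤ) ^ i) fun x hx y hy h => idx_inj hx hy h,
    image_idx, neg_one_geom_sum, if_neg (Nat.not_even_iff_odd.2 h)]

/-- A vertical edge: a row together with one of the cuts of that row. -/
abbrev Edge (J : ℤ → Finset ℝ) := {e : ℤ × ℝ // e.2 ∈ J e.1}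

namespace Edge

variable {J : ℤ → Finset ℝ}

/-- Edges are directed upwards or downwards, alternately along each row, so that the same side is
always on the left hand. -/
def up (e : Edge J) : Prop := Even (idx (J e.1.1) e.1.2)

open Classical in
/-- The level at which an edge starts. -/
noncomputable def start (e : Edge J) : ℤ := if e.up then e.1.1 else e.1.1 + 1

open Classical in
/-- The level at which an edge ends. -/
noncomputable def fin (e : Edge J) : ℤ := if e.up then e.1.1 + 1 else e.1.1

lemma start_fin (e : Edge J) : (e.start = e.1.1 ∧ e.fin = e.1.1 + 1) ∨
    (e.start = e.1.1 + 1 ∧ e.fin = e.1.1) := by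
  unfold start fin; split <;> simp

end Edge

/-- The set of all abscissas of edges abutting on the level `l`. -/
noncomputable def lev (J : ℤ → Finset ℝ) (l : ℤ) : Finset ℝ := J (l - 1) ∪ J l

/-- Two edges are consecutive if the second one starts at the level where the first one ends, and
their abscissas are the elements number `2 * i` and `2 * i + 1`, in some order, of that level. -/
def Nxt {J : ℤ → Finset ℝ} (e e' : Edge J) : Prop :=
  e.fin = e'.start ∧ e.1.2 ≠ e'.1.2 ∧ idx (lev J e.fin) e.1.2 / 2 = idx (lev J e.fin) e'.1.2 / 2

section

variable {J : ℤ → Finset ℝ}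

lemma mem_lev_fin (e : Edge J) : e.1.2 ∈ lev J e.fin := by
  have := e.2
  rcases e.start_fin with h | h <;> rw [h.2, lev, Finset.mem_union] <;> simp [this]

lemma mem_lev_start (e : Edge J) : e.1.2 ∈ lev J e.start := by
  have := e.2
  rcases e.start_fin with h | h <;> rw [h.1, lev, Finset.mem_union] <;> simp [this]

/-- Edges abutting on the same level are determined by their abscissas. -/
lemma edge_eq (hdisj : ∀ r, Disjoint (J r) (J (r + 1))) {e e' : Edge J} (h : e.1.2 = e'.1.2)
    {l : ℤ} (h1 : e.1.1 = l - 1 ∨ e.1.1 = l) (h2 : e'.1.1 = l - 1 ∨ e'.1.1 = l) : e = e' := by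
  have hd := Finset.disjoint_left.1 (hdisj (l - 1))
  rw [sub_add_cancel] at hd
  have he := e.2
  have he' := e'.2
  have : e.1.1 = e'.1.1 := by
    rcases h1 with h1 | h1 <;> rcases h2 with h2 | h2 <;> rw [h1] at he <;> rw [h2, ← h] at he'
    · rw [h1, h2]
    · exact (hd he he').elim
    · exact (hd he' he).elim
    · rw [h1, h2]
  exact Subtype.ext (Prod.ext this h)

lemma start_row {e : Edge J} {l : ℤ} (h : e.start = l) : e.1.1 = l - 1 ∨ e.1.1 = l := by
  rcases e.start_fin with h' | h' <;> omega

lemma fin_row {e : Edge J} {l : ℤ} (h : e.fin = l) : e.1.1 = l - 1 ∨ e.1.1 = l := by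
  rcases e.start_fin with h' | h' <;> omega

lemma card_lev (hodd : ∀ r, Odd (J r).card) (hdisj : ∀ r, Disjoint (J r) (J (r + 1))) (l : ℤ) :
    Even (lev J l).card := by
  have hd := hdisj (l - 1)
  rw [sub_add_cancel] at hd
  rw [lev, Finset.card_union_of_disjoint hd]
  exact (hodd _).add_odd (hodd _)

/-- Of two edges abutting on the level `l`, with consecutive numbers `2 * i` and `2 * i + 1` there, exactly
one starts and exactly one ends at `l`. Indeed the number of an edge at `l` is the sum of its
numbers among the edges of the rows below and above `l`, and directions alternate along rows. -/
lemma parity (hdisj : ∀ r, Disjoint (J r) (J (r + 1))) {l : ℤ} {e e' : Edge J}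
    (h1 : e.1.1 = l - 1 ∨ e.1.1 = l) (h2 : e'.1.1 = l - 1 ∨ e'.1.1 = l)
    (h3 : Even (idx (lev J l) e.1.2)) (h4 : idx (lev J l) e'.1.2 = idx (lev J l) e.1.2 + 1) :
    (e.fin = l ↔ e'.start = l) ∧ (e.start = l ↔ e'.fin = l) := by
  have hd := hdisj (l - 1)
  rw [sub_add_cancel] at hd
  have hx : e.1.2 ∈ lev J l := by
    have := e.2
    rw [lev, Finset.mem_union]
    rcases h1 with h1 | h1 <;> rw [h1] at this <;> simp [this]
  have ha := idx_succ (S := J (l - 1)) (T := lev J l) Finset.subset_union_left hx h4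
  have hb := idx_succ (S := J l) (T := lev J l) Finset.subset_union_right hx h4
  rw [lev, idx_union hd] at h3
  have hd' : e.1.2 ∈ J (l - 1) → e.1.2 ∉ J l := fun h => Finset.disjoint_left.1 hd h
  have he := e.2
  unfold Edge.fin Edge.start Edge.up
  rcases h1 with h1 | h1 <;> rcases h2 with h2 | h2 <;> rw [h1] at he <;> rw [h1, h2] <;>
    simp only [Nat.even_iff] at * <;> grind

/-- The number of edges abutting on a level is even, so that the pairing leaves none out. -/
lemma exists_nxt (hodd : ∀ r, Odd (J r).card) (hdisj : ∀ r, Disjoint (J r) (J (r + 1)))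
    {l : ℤ} {e : Edge J} (he : e.1.2 ∈ lev J l) : ∃ e' : Edge J, (e'.1.1 = l - 1 ∨ e'.1.1 = l) ∧
      e.1.2 ≠ e'.1.2 ∧ idx (lev J l) e.1.2 / 2 = idx (lev J l) e'.1.2 / 2 := by
  have hc := card_lev hodd hdisj l
  have hlt := idx_lt_card he
  obtain ⟨y, hy, hye⟩ : ∃ y ∈ lev J l, idx (lev J l) e.1.2 / 2 = idx (lev J l) y / 2 ∧
      idx (lev J l) e.1.2 ≠ idx (lev J l) y := by
    rcases Nat.even_or_odd (idx (lev J l) e.1.2) with h | h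
    · obtain ⟨y, hy, h'⟩ := exists_idx_eq (S := lev J l) (i := idx (lev J l) e.1.2 + 1) (by grind)
      exact ⟨y, hy, by grind, by omega⟩
    · obtain ⟨y, hy, h'⟩ := exists_idx_eq (S := lev J l) (i := idx (lev J l) e.1.2 - 1) (by grind)
      exact ⟨y, hy, by grind, by grind⟩
  have hne : e.1.2 ≠ y := fun h => hye.2 (by rw [h])
  rw [lev, Finset.mem_union] at hy
  rcases hy with hy | hy
  · exact ⟨⟨(l - 1, y), hy⟩, Or.inl rfl, hne, hye.1⟩
  · exact ⟨⟨(l, y), hy⟩, Or.inr rfl, hne, hye.1⟩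

/-- The same as `parity`, for two paired edges taken in either order. -/
lemma parity' (hdisj : ∀ r, Disjoint (J r) (J (r + 1))) {l : ℤ} {e e' : Edge J}
    (h1 : e.1.1 = l - 1 ∨ e.1.1 = l) (h2 : e'.1.1 = l - 1 ∨ e'.1.1 = l) (he : e.1.2 ∈ lev J l)
    (he' : e'.1.2 ∈ lev J l) (hne : e.1.2 ≠ e'.1.2)
    (h : idx (lev J l) e.1.2 / 2 = idx (lev J l) e'.1.2 / 2) : e.fin = l ↔ e'.start = l := by
  have : idx (lev J l) e.1.2 ≠ idx (lev J l) e'.1.2 := fun h => hne (idx_inj he he' h)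
  rcases Nat.even_or_odd (idx (lev J l) e.1.2) with h3 | h3
  · exact (parity hdisj h1 h2 h3 (by grind)).1
  · exact (parity hdisj h2 h1 (by grind) (by grind)).2.symm

lemma mem_lev_of_row {l : ℤ} {e : Edge J} (h1 : e.1.1 = l - 1 ∨ e.1.1 = l) : e.1.2 ∈ lev J l := by
  have := e.2
  rw [lev, Finset.mem_union]
  rcases h1 with h1 | h1 <;> rw [h1] at this <;> simp [this]

/-- The successor permutation of the set of edges. -/
lemma exists_perm (hodd : ∀ r, Odd (J r).card) (hdisj : ∀ r, Disjoint (J r) (J (r + 1))) :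
    ∃ f : Equiv.Perm (Edge J), ∀ e, Nxt e (f e) := by
  have hex : ∀ e : Edge J, ∃ e', Nxt e e' := by
    intro e
    obtain ⟨e', h1, h2, h3⟩ := exists_nxt hodd hdisj (mem_lev_fin e)
    exact ⟨e', ((parity' hdisj (fin_row rfl) h1 (mem_lev_fin e) (mem_lev_of_row h1) h2 h3).1
      rfl).symm, h2, h3⟩
  choose f hf using hex
  have hinj : Function.Injective f := by
    intro e e' h
    obtain ⟨h1, h2, h3⟩ := hf e
    obtain ⟨h1', h2', h3'⟩ := hf e'
    rw [← h] at h1' h2' h3'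
    rw [h1'.trans h1.symm] at h3'
    have hm' : e'.1.2 ∈ lev J e.fin := h1'.trans h1.symm ▸ mem_lev_fin e'
    have hm'' : (f e).1.2 ∈ lev J e.fin := h1 ▸ mem_lev_start (f e)
    refine edge_eq hdisj ?_ (fin_row rfl) (fin_row (h1'.trans h1.symm))
    refine idx_inj (mem_lev_fin e) hm' ?_
    have := mt (idx_inj (mem_lev_fin e) hm'') h2
    have := mt (idx_inj hm' hm'') h2'
    omega
  have hsurj : Function.Surjective f := by
    intro e
    obtain ⟨e', h1, h2, h3⟩ := exists_nxt hodd hdisj (mem_lev_start e)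
    have hfin : e'.fin = e.start :=
      (parity' hdisj h1 (start_row rfl) (mem_lev_of_row h1) (mem_lev_start e) h2.symm h3.symm).2 rfl
    refine ⟨e', ?_⟩
    obtain ⟨h4, h5, h6⟩ := hf e'
    rw [hfin] at h4 h6
    refine edge_eq hdisj ?_ (start_row h4.symm) (start_row rfl)
    have hm' : e'.1.2 ∈ lev J e.start := mem_lev_of_row h1
    have hm'' : (f e').1.2 ∈ lev J e.start := h4 ▸ mem_lev_start (f e')
    refine idx_inj hm'' (mem_lev_start e) ?_
    have := mt (idx_inj (mem_lev_start e) hm') h2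
    have := mt (idx_inj hm' hm'') h5
    omega
  exact ⟨Equiv.ofBijective f ⟨hinj, hsurj⟩, hf⟩

end

/-! ### A path of edges from bottom to top -/

section

variable {J : ℤ → Finset ℝ}

lemma finite_row (J : ℤ → Finset ℝ) (r : ℤ) : {e : Edge J | e.1.1 = r}.Finite := by
  refine Set.Finite.of_finite_image (f := fun e : Edge J => e.1.2)
    ((J r).finite_toSet.subset ?_) ?_
  · rintro _ ⟨e, he, rfl⟩
    have := e.2
    rw [show e.1.1 = r from he] at this
    exact this
  · intro e he e' he' h
    exact Subtype.ext (Prod.ext ((show e.1.1 = r from he).trans (show e'.1.1 = r from he').symm) h)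

lemma finite_start (J : ℤ → Finset ℝ) (l : ℤ) : {e : Edge J | e.start = l}.Finite :=
  ((finite_row J (l - 1)).union (finite_row J l)).subset fun _ he => start_row he

open Classical in
/-- The indicator of the edges which start above row `0`. -/
noncomputable def above (e : Edge J) : ℤ := if 1 ≤ e.start then 1 else 0

open Classical in
/-- The algebraic number of crossings of row `0` by an edge. -/
noncomputable def cross (e : Edge J) : ℤ :=
  if e.1.1 = 0 then (-1) ^ idx (J e.1.1) e.1.2 else 0

/-- Along a path, `above` changes exactly when row `0` is crossed. -/
lemma above_sub {e e' : Edge J} (h : Nxt e e') : above e' - above e = cross e := by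
  have h1 := h.1
  unfold above cross
  rw [← h1]
  unfold Edge.start Edge.fin Edge.up
  by_cases he : Even (idx (J e.1.1) e.1.2)
  · simp only [if_pos he, he.neg_one_pow]; grind
  · simp only [if_neg he, (Nat.not_even_iff_odd.1 he).neg_one_pow]; grind

/-- Some orbit of the successor permutation crosses row `0` upwards more often than downwards. -/
lemma exists_cycle (hodd : ∀ r, Odd (J r).card) (f : Equiv.Perm (Edge J)) :
    ∃ (e₀ : Edge J) (S : Finset (Edge J)),
      (∀ e, e ∈ S ↔ e.1.1 = 0 ∧ f.SameCycle e₀ e) ∧ 0 < ∑ e ∈ S, cross e := by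
  classical
  set F := (finite_row J 0).toFinset with hF
  have hsum : ∑ e ∈ F, cross e = 1 := by
    rw [← sum_neg_one_idx (hodd 0)]
    refine Finset.sum_nbij (fun e => e.1.2) ?_ ?_ ?_ ?_
    · intro e he
      have h0 : e.1.1 = 0 := by simpa [hF] using he
      have := e.2
      rwa [h0] at this
    · intro e he e' he' h
      have h0 : e.1.1 = 0 := by simpa [hF] using he
      have h0' : e'.1.1 = 0 := by simpa [hF] using he'
      exact Subtype.ext (Prod.ext (h0.trans h0'.symm) h)
    · intro x hx
      exact ⟨⟨(0, x), hx⟩, by simp [hF], rfl⟩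
    · intro e he
      have h0 : e.1.1 = 0 := by simpa [hF] using he
      rw [cross, if_pos h0, h0]
  let q : Edge J → Quotient (Equiv.Perm.SameCycle.setoid f) := fun e => Quotient.mk _ e
  have h1 := Finset.sum_fiberwise_of_maps_to (s := F) (t := F.image q) (g := q)
    (fun e he => Finset.mem_image_of_mem q he) cross
  obtain ⟨c, hc, hpos⟩ : ∃ c ∈ F.image q, 0 < ∑ e ∈ F with q e = c, cross e := by
    by_contra! h
    have := Finset.sum_nonpos h
    omega
  obtain ⟨e₀, he₀, rfl⟩ := Finset.mem_image.1 hc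
  refine ⟨e₀, _, ?_, hpos⟩
  intro e
  rw [Finset.mem_filter]
  refine and_congr (by simp [hF]) ?_
  exact ⟨fun h => (Quotient.exact h).symm, fun h => Quotient.sound h.symm⟩

/-- An orbit crossing row `0` upwards more often than downwards is infinite. Since it visits row `0`
finitely often, it is eventually above that row in the future and below it in the past. -/
lemma comb_aux (hodd : ∀ r, Odd (J r).card) {f : Equiv.Perm (Edge J)}
    (hf : ∀ e, Nxt e (f e)) : ∃ e₀ : Edge J, Function.Injective (fun k : ℤ => (f ^ k) e₀) ∧
      ∃ K : ℤ, ∀ k, K ≤ k → 1 ≤ ((f ^ k) e₀).start ∧ ((f ^ (-k)) e₀).start ≤ 0 := by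
  classical
  obtain ⟨e₀, S, hS, hpos⟩ := exists_cycle hodd f
  set g : ℤ → Edge J := fun k => (f ^ k) e₀ with hg
  have hgs : ∀ k, g (k + 1) = f (g k) := by
    intro k
    simp only [hg]
    rw [add_comm, zpow_add, zpow_one]; rfl
  have hinj : Function.Injective g := by
    by_contra hni
    -- a finite orbit has as many upward as downward crossings
    obtain ⟨n, hn, hne⟩ : ∃ n : ℤ, n ≠ 0 ∧ (f ^ n) e₀ = e₀ := by
      simp only [Function.Injective, not_forall] at hni
      obtain ⟨k, m, h1, h2⟩ := hni
      refine ⟨k - m, sub_ne_zero.2 h2, ?_⟩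
      have h1' : (f ^ k) e₀ = (f ^ m) e₀ := h1
      rw [sub_eq_neg_add, zpow_add, Equiv.Perm.mul_apply, h1', ← Equiv.Perm.mul_apply, ← zpow_add,
        neg_add_cancel, zpow_zero, Equiv.Perm.one_apply]
    have hfin : {e | f.SameCycle e₀ e}.Finite := by
      refine ((Set.finite_Ico (0 : ℤ) |n|).image g).subset ?_
      rintro e ⟨k, rfl⟩
      refine ⟨k % n, ⟨Int.emod_nonneg _ hn, Int.emod_lt_abs _ hn⟩, ?_⟩
      simp only [hg]
      conv_rhs => rw [← Int.emod_add_mul_ediv k n, zpow_add, zpow_mul, Equiv.Perm.mul_apply,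
        Equiv.Perm.zpow_apply_eq_self_of_apply_eq_self hne]
    have h1 : ∑ e ∈ hfin.toFinset, above (f e) = ∑ e ∈ hfin.toFinset, above e :=
      Finset.sum_equiv f (by simp [Equiv.Perm.sameCycle_apply_right]) (fun _ _ => rfl)
    have h2 : ∑ e ∈ hfin.toFinset, cross e = 0 := by
      rw [← sub_eq_zero.2 h1, ← Finset.sum_sub_distrib]
      exact Finset.sum_congr rfl fun e _ => (above_sub (hf e)).symm
    have h3 : ∑ e ∈ S, cross e = ∑ e ∈ hfin.toFinset, cross e := by
      refine Finset.sum_subset ?_ ?_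
      · intro e he
        simpa using ((hS e).1 he).2
      · intro e he heS
        rw [cross, if_neg]
        intro h0
        exact heS ((hS e).2 ⟨h0, by simpa using he⟩)
    omega
  refine ⟨e₀, hinj, ?_⟩
  have hfin : (g ⁻¹' {e | e.1.1 = 0}).Finite := (finite_row J 0).preimage hinj.injOn
  obtain ⟨B, hB⟩ := hfin.isBounded.exists_norm_le
  refine ⟨⌈B⌉ + 1, fun k hk => ?_⟩
  have hB0 : ∀ m, (g m).1.1 = 0 → -k ≤ m ∧ m < k := by
    intro m hm
    have h1 := hB m hm
    rw [Int.norm_eq_abs, abs_le] at h1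
    have h2 : (k : ℝ) ≥ ⌈B⌉ + 1 := by exact_mod_cast hk
    have h3 := Int.le_ceil B
    constructor
    · have : (-k : ℝ) ≤ m := by linarith
      exact_mod_cast this
    · have : (m : ℝ) < k := by linarith
      exact_mod_cast this
  have hsum : above (g k) - above (g (-k)) = ∑ e ∈ S, cross e := by
    rcases lt_or_ge k 0 with hk0 | hk0
    · -- then row `0` is not visited at all
      exfalso
      obtain ⟨e, he⟩ : S.Nonempty := by
        by_contra h
        rw [Finset.not_nonempty_iff_eq_empty.1 h] at hpos
        simp at hpos
      obtain ⟨h0, m, hm⟩ := (hS e).1 he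
      have := hB0 m (by rw [hg]; simp only; rw [hm]; exact h0)
      omega
    · have h1 := Finset.sum_range_sub (fun i : ℕ => above (g (-k + i))) (2 * k).toNat
      have h2 : -k + ((2 * k).toNat : ℤ) = k := by omega
      simp only [h2, Nat.cast_zero, add_zero] at h1
      rw [← h1]
      have h4 : ∀ i : ℕ, above (g (-k + (i + 1 : ℕ))) - above (g (-k + i)) = cross (g (-k + i)) := by
        intro i
        rw [← above_sub (hf _), ← hgs]
        push_cast
        ring_nf
      rw [Finset.sum_congr rfl fun i _ => h4 i]
      symm
      rw [← Finset.sum_subset (s₁ := (Finset.range (2 * k).toNat).filter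
        fun i : ℕ => (g (-k + i)).1.1 = 0) (Finset.filter_subset _ _)]
      · symm
        refine Finset.sum_nbij (fun i : ℕ => g (-k + i)) ?_ ?_ ?_ (fun _ _ => rfl)
        · intro i hi
          exact (hS _).2 ⟨(Finset.mem_filter.1 hi).2, _, rfl⟩
        · intro i _ j _ hij
          have := hinj hij
          omega
        · intro e he
          obtain ⟨h0, m, hm⟩ := (hS e).1 he
          have h5 := hB0 m (by rw [hg]; simp only; rw [hm]; exact h0)
          have h6 : -k + ((m + k).toNat : ℤ) = m := by omega
          refine ⟨(m + k).toNat, ?_, ?_⟩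
          · simp only [Finset.coe_filter, Set.mem_ofPred_eq, Finset.mem_range, h6]
            refine ⟨by omega, ?_⟩
            rw [hg]; simp only; rw [hm]; exact h0
          · simp only [h6]
            exact hm
      · intro i hi hi'
        rw [cross, if_neg]
        intro h0
        exact hi' (Finset.mem_filter.2 ⟨hi, h0⟩)
  rw [← hsum] at hpos
  unfold above at hpos
  change 1 ≤ (g k).start ∧ (g (-k)).start ≤ 0
  split_ifs at hpos <;> omega

/-- If all rows have an odd number of cuts, and consecutive rows have no common cut, then among the
paths of consecutive edges there is one going from bottom to top. -/
theorem comb (hodd : ∀ r, Odd (J r).card) (hdisj : ∀ r, Disjoint (J r) (J (r + 1))) :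
    ∃ g : ℤ → Edge J, Function.Injective g ∧ (∀ k, Nxt (g k) (g (k + 1))) ∧
      Filter.Tendsto (fun k => (g k).start) Filter.atTop Filter.atTop ∧
      Filter.Tendsto (fun k => (g k).start) Filter.atBot Filter.atBot := by
  obtain ⟨f, hf⟩ := exists_perm hodd hdisj
  obtain ⟨e₀, hinj, K, hK⟩ := comb_aux hodd hf
  have hfin : ∀ a b : ℤ, {k : ℤ | a ≤ ((f ^ k) e₀).start ∧ ((f ^ k) e₀).start ≤ b}.Finite := by
    intro a b
    have : {e : Edge J | a ≤ e.start ∧ e.start ≤ b}.Finite :=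
      ((Set.finite_Icc a b).biUnion fun l _ => finite_start J l).subset fun e he => by
        simp only [Set.mem_iUnion]
        exact ⟨e.start, he, rfl⟩
    exact this.preimage hinj.injOn
  refine ⟨_, hinj, fun k => ?_, ?_, ?_⟩
  · have : (f ^ (k + 1)) e₀ = f ((f ^ k) e₀) := by
      rw [add_comm, zpow_add, zpow_one]; rfl
    rw [this]
    exact hf _
  · rw [Filter.tendsto_atTop]
    intro b
    obtain ⟨M, hM⟩ := (hfin 1 b).bddAbove
    filter_upwards [Filter.eventually_ge_atTop K, Filter.eventually_gt_atTop M] with k h1 h2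
    by_contra h3
    have := hM (show k ∈ _ from ⟨(hK k h1).1, (not_le.1 h3).le⟩)
    omega
  · rw [Filter.tendsto_atBot]
    intro b
    obtain ⟨M, hM⟩ := (hfin b 0).bddBelow
    filter_upwards [Filter.eventually_le_atBot (-K), Filter.eventually_lt_atBot M] with k h1 h2
    by_contra h3
    have h4 := (hK (-k) (by omega)).2
    rw [neg_neg] at h4
    have := hM (show k ∈ _ from ⟨(not_le.1 h3).le, h4⟩)
    omega

end

/-! ### The line drawn by a path of edges -/

/-- Concatenation of a sequence of paths. -/
lemma continuous_concat {X : Type*} [TopologicalSpace X] {φ : ℤ → ℝ → X}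
    (hφ : ∀ k, Continuous (φ k)) (h : ∀ k, φ k 1 = φ (k + 1) 0) :
    Continuous fun s : ℝ => φ ⌊s⌋ (Int.fract s) := by
  have hlf : LocallyFinite fun k : ℤ => Set.Icc (k : ℝ) (k + 1) := by
    intro s
    refine ⟨Set.Ioo (s - 1) (s + 1), Ioo_mem_nhds (by linarith) (by linarith), ?_⟩
    refine (Set.finite_Icc (⌊s⌋ - 2) (⌊s⌋ + 2)).subset ?_
    rintro k ⟨u, ⟨h1, h2⟩, h3, h4⟩
    have h5 := Int.floor_le s
    have h6 := Int.lt_floor_add_one s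
    constructor
    · have : (⌊s⌋ - 2 : ℝ) < k := by linarith
      exact_mod_cast this.le
    · have : (k : ℝ) < ⌊s⌋ + 2 := by linarith
      exact_mod_cast this.le
  refine hlf.continuous (Set.eq_univ_of_forall fun s => Set.mem_iUnion.2
    ⟨⌊s⌋, Int.floor_le s, (Int.lt_floor_add_one s).le⟩) (fun _ => isClosed_Icc) fun k => ?_
  have : Continuous fun s : ℝ => φ k (s - k) := (hφ k).comp (by fun_prop)
  refine this.continuousOn.congr ?_
  rintro s ⟨h1, h2⟩
  rcases h2.lt_or_eq with h2 | h2
  · have h3 : ⌊s⌋ = k := Int.floor_eq_iff.2 ⟨h1, h2⟩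
    simp only [Int.fract, h3]
  · have h3 : ⌊s⌋ = k + 1 := by rw [h2]; simp
    have h4 : s - k = 1 := by rw [h2]; ring
    simp only [Int.fract, h3, h4, h k]
    congr 1
    rw [h2]; push_cast; ring

/-- An injective curve whose height goes from `-∞` to `+∞` is a properly embedded line, with proper
projection onto the vertical axis. -/
lemma line_of_curve {γ : ℝ → ℝ × ℝ} (hγ : Continuous γ) (hinj : Function.Injective γ)
    (ht : Filter.Tendsto (fun s => (γ s).2) Filter.atTop Filter.atTop)
    (hb : Filter.Tendsto (fun s => (γ s).2) Filter.atBot Filter.atBot) :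
    IsProperLine (Set.range γ) ∧
      (∀ K : Set ℝ, IsCompact K → IsCompact {z ∈ Set.range γ | z.2 ∈ K}) ∧
      Prod.snd '' Set.range γ = Set.univ := by
  have hc : Continuous fun s => (γ s).2 := continuous_snd.comp hγ
  have hco : Filter.Tendsto (fun s => (γ s).2) (Filter.cocompact ℝ) (Filter.cocompact ℝ) := by
    rw [cocompact_eq_atBot_atTop]
    exact Filter.Tendsto.sup_sup hb ht
  refine ⟨⟨γ, hγ, hinj, ?_, rfl⟩, ?_, ?_⟩
  · rw [Filter.hasBasis_cocompact.tendsto_right_iff]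
    intro K hK
    have := hco.eventually ((hK.image continuous_snd).compl_mem_cocompact)
    filter_upwards [this] with s hs h
    exact hs ⟨_, h, rfl⟩
  · intro K hK
    have h1 : IsCompact ((fun s => (γ s).2) ⁻¹' K) :=
      ((isProperMap_iff_tendsto_cocompact.2 ⟨hc, hco⟩).isCompact_preimage hK)
    convert h1.image hγ using 1
    ext z
    constructor
    · rintro ⟨⟨s, rfl⟩, h⟩; exact ⟨s, h, rfl⟩
    · rintro ⟨s, h, rfl⟩; exact ⟨⟨s, rfl⟩, h⟩
  · rw [← Set.range_comp]
    exact (hc.surjective ht hb).range_eq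

/-- `p` and `q` are, for some `i`, the elements number `2 * i` and `2 * i + 1` of `T`. -/
def Matched (T : Finset ℝ) (p q : ℝ) : Prop :=
  p ∈ T ∧ q ∈ T ∧ Even (idx T p) ∧ idx T q = idx T p + 1

lemma matched_of {T : Finset ℝ} {p q : ℝ} (hp : p ∈ T) (hq : q ∈ T) (hne : p ≠ q)
    (h : idx T p / 2 = idx T q / 2) : Matched T (min p q) (max p q) := by
  wlog hpq : p ≤ q generalizing p q
  · rw [min_comm, max_comm]
    exact this hq hp hne.symm h.symm (not_le.1 hpq).le
  rw [min_eq_left hpq, max_eq_right hpq]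
  have := idx_lt hp (lt_of_le_of_ne hpq hne)
  exact ⟨hp, hq, by grind, by omega⟩

lemma matched_unique {T : Finset ℝ} {p q p' q' x : ℝ} (h : Matched T p q) (h' : Matched T p' q')
    (hx : x ∈ Set.Icc p q) (hx' : x ∈ Set.Icc p' q') : p = p' ∧ q = q' := by
  obtain ⟨hp, hq, he, h1⟩ := h
  obtain ⟨hp', hq', he', h1'⟩ := h'
  have h2 := idx_mono T (hx.1.trans hx'.2)
  have h3 := idx_mono T (hx'.1.trans hx.2)
  have : idx T p = idx T p' := by grind
  exact ⟨idx_inj hp hp' this, idx_inj hq hq' (by omega)⟩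

lemma matched_between {T : Finset ℝ} {p q x : ℝ} (h : Matched T p q) (hx : x ∈ T)
    (hx' : x ∈ Set.Icc p q) : x = p ∨ x = q := by
  obtain ⟨hp, hq, he, h1⟩ := h
  have h2 := idx_mono T hx'.1
  have h3 := idx_mono T hx'.2
  rcases (by omega : idx T x = idx T p ∨ idx T x = idx T q) with h | h
  · exact Or.inl (idx_inj hx hp h)
  · exact Or.inr (idx_inj hx hq h)

/-- The path which follows the edge number `k` and then goes horizontally to the next one. -/
noncomputable def stepPath {J : ℤ → Finset ℝ} (Y : ℤ → ℝ) (g : ℤ → Edge J) (k : ℤ) (u : ℝ) :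
    ℝ × ℝ :=
  ((g k).1.2 + max 0 (2 * u - 1) * ((g (k + 1)).1.2 - (g k).1.2),
    Y (g k).start + min 1 (2 * u) * (Y (g k).fin - Y (g k).start))

section

variable {J : ℤ → Finset ℝ} {Y : ℤ → ℝ} {g : ℤ → Edge J}

lemma affine_mem_uIcc {a b s : ℝ} (h0 : 0 ≤ s) (h1 : s ≤ 1) :
    a + s * (b - a) ∈ Set.Icc (min a b) (max a b) := by
  constructor
  · rcases le_total a b with h | h
    · rw [min_eq_left h]; nlinarith
    · rw [min_eq_right h]; nlinarith
  · rcases le_total a b with h | h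
    · rw [max_eq_right h]; nlinarith
    · rw [max_eq_left h]; nlinarith

lemma affine_ne {a b s : ℝ} (hab : a ≠ b) (h1 : s < 1) : a + s * (b - a) ≠ b := by
  intro h
  have : (1 - s) * (b - a) = 0 := by linarith
  rcases mul_eq_zero.1 this with h | h
  · linarith
  · exact hab (by linarith)

/-- The two halves of `stepPath`. -/
lemma stepPath_cases (hg : ∀ k, Nxt (g k) (g (k + 1))) (hY : StrictMono Y) {k : ℤ} {u : ℝ}
    (h0 : 0 ≤ u) (h1 : u < 1) :
    (u < 1 / 2 ∧ (stepPath Y g k u).1 = (g k).1.2 ∧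
        (stepPath Y g k u).2 = Y (g k).start + 2 * u * (Y (g k).fin - Y (g k).start) ∧
        (stepPath Y g k u).2 ∈ Set.Icc (Y (g k).1.1) (Y ((g k).1.1 + 1)) ∧
        (stepPath Y g k u).2 ≠ Y (g k).fin) ∨
      ((stepPath Y g k u).2 = Y (g k).fin ∧ (stepPath Y g k u).1 =
        (g k).1.2 + (2 * u - 1) * ((g (k + 1)).1.2 - (g k).1.2) ∧
        (stepPath Y g k u).1 ∈
          Set.Icc (min (g k).1.2 (g (k + 1)).1.2) (max (g k).1.2 (g (k + 1)).1.2) ∧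
        (stepPath Y g k u).1 ≠ (g (k + 1)).1.2) := by
  rcases lt_or_ge u (1 / 2) with h | h
  · left
    have hmin : min 1 (2 * u) = 2 * u := min_eq_right (by linarith)
    have hmax : max 0 (2 * u - 1) = 0 := max_eq_left (by linarith)
    have hm := affine_mem_uIcc (a := Y (g k).start) (b := Y (g k).fin) (s := 2 * u)
      (by linarith) (by linarith)
    have hlt : Y (g k).1.1 ≤ Y ((g k).1.1 + 1) := hY.monotone (by omega)
    refine ⟨h, by simp [stepPath, hmax], by simp [stepPath, hmin], ?_, ?_⟩
    · rw [stepPath, hmin]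
      rcases (g k).start_fin with h' | h' <;> rw [h'.1, h'.2] at hm ⊢
      · rwa [min_eq_left hlt, max_eq_right hlt] at hm
      · rwa [min_eq_right hlt, max_eq_left hlt] at hm
    · rw [stepPath, hmin]
      refine affine_ne (fun h' => ?_) (by linarith)
      have := hY.injective h'
      rcases (g k).start_fin with h' | h' <;> omega
  · right
    have hmin : min 1 (2 * u) = 1 := min_eq_left (by linarith)
    have hmax : max 0 (2 * u - 1) = 2 * u - 1 := max_eq_right (by linarith)
    refine ⟨by simp [stepPath, hmin], by simp [stepPath, hmax], ?_, ?_⟩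
    · rw [stepPath, hmax]
      exact affine_mem_uIcc (by linarith) (by linarith)
    · rw [stepPath, hmax]
      exact affine_ne (hg k).2.1 (by linarith)

lemma start_ne_fin (e : Edge J) : e.start ≠ e.fin := by
  rcases e.start_fin with h | h <;> omega

lemma row_start (e : Edge J) : e.1.1 = e.start - 1 ∨ e.1.1 = e.start := start_row rfl

lemma row_fin (e : Edge J) : e.1.1 = e.fin - 1 ∨ e.1.1 = e.fin := fin_row rfl

/-- The end points of a horizontal step are matched. -/
lemma matched_step (hg : ∀ k, Nxt (g k) (g (k + 1))) (k : ℤ) :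
    Matched (lev J (g k).fin) (min (g k).1.2 (g (k + 1)).1.2) (max (g k).1.2 (g (k + 1)).1.2) :=
  matched_of (mem_lev_fin _) ((hg k).1 ▸ mem_lev_start _) (hg k).2.1 (hg k).2.2

/-- A vertical and a horizontal segment of the path do not meet. -/
lemma step_vh (hdisj : ∀ r, Disjoint (J r) (J (r + 1)))
    (hg : ∀ k, Nxt (g k) (g (k + 1))) (hY : StrictMono Y) {k k' : ℤ} {x y : ℝ}
    (hx : x = (g k).1.2) (hy : y ∈ Set.Icc (Y (g k).1.1) (Y ((g k).1.1 + 1)))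
    (hyne : y ≠ Y (g k).fin) (hy' : y = Y (g k').fin)
    (hx' : x ∈ Set.Icc (min (g k').1.2 (g (k' + 1)).1.2) (max (g k').1.2 (g (k' + 1)).1.2))
    (hxne : x ≠ (g (k' + 1)).1.2) : False := by
  rw [hy'] at hy hyne
  have h1 := hY.le_iff_le.1 hy.1
  have h2 := hY.le_iff_le.1 hy.2
  have h3 : (g k').fin ≠ (g k).fin := fun h => hyne (by rw [h])
  have h4 : (g k).start = (g k').fin := by
    rcases (g k).start_fin with h | h <;> omega
  have h5 : x ∈ lev J (g k').fin := by rw [hx, ← h4]; exact mem_lev_start _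
  have h6 : x = (g k').1.2 := by
    rcases matched_between (matched_step hg k') h5 hx' with h | h <;>
      rcases le_total (g k').1.2 (g (k' + 1)).1.2 with h' | h' <;> simp [h'] at h <;> tauto
  have h7 : g k = g k' := edge_eq hdisj (hx.symm.trans h6) (start_row h4) (row_fin _)
  rw [h7] at h4
  exact start_ne_fin _ h4

/-- Vertical segments of the path belonging to different steps do not meet. -/
lemma step_vv (hdisj : ∀ r, Disjoint (J r) (J (r + 1))) (hinj : Function.Injective g)
    (hY : StrictMono Y) {k k' : ℤ} {y : ℝ}
    (hx : (g k).1.2 = (g k').1.2) (hy : y ∈ Set.Icc (Y (g k).1.1) (Y ((g k).1.1 + 1)))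
    (hy' : y ∈ Set.Icc (Y (g k').1.1) (Y ((g k').1.1 + 1))) : k = k' := by
  have h1 := hY.le_iff_le.1 (hy.1.trans hy'.2)
  have h2 := hY.le_iff_le.1 (hy'.1.trans hy.2)
  apply hinj
  rcases le_total (g k).1.1 (g k').1.1 with h | h
  · exact edge_eq hdisj hx (l := (g k').1.1) (by omega) (by omega)
  · exact edge_eq hdisj hx (l := (g k).1.1) (by omega) (by omega)

/-- Horizontal segments of the path belonging to different steps do not meet. -/
lemma step_hh (hdisj : ∀ r, Disjoint (J r) (J (r + 1))) (hinj : Function.Injective g)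
    (hg : ∀ k, Nxt (g k) (g (k + 1))) (hY : StrictMono Y) {k k' : ℤ} {x : ℝ}
    (hl : Y (g k).fin = Y (g k').fin)
    (hx : x ∈ Set.Icc (min (g k).1.2 (g (k + 1)).1.2) (max (g k).1.2 (g (k + 1)).1.2))
    (hx' : x ∈ Set.Icc (min (g k').1.2 (g (k' + 1)).1.2) (max (g k').1.2 (g (k' + 1)).1.2)) :
    k = k' := by
  have hl := hY.injective hl
  have h1 := matched_step hg k
  have h2 := matched_step hg k'
  rw [← hl] at h2
  obtain ⟨h3, h4⟩ := matched_unique h1 h2 hx hx'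
  have h5 : (g k).1.2 = (g k').1.2 ∨ (g k).1.2 = (g (k' + 1)).1.2 := by
    rcases le_total (g k).1.2 (g (k + 1)).1.2 with h' | h' <;>
    rcases le_total (g k').1.2 (g (k' + 1)).1.2 with h'' | h'' <;> simp [h', h''] at h3 h4 <;> tauto
  rcases h5 with h5 | h5
  · exact hinj (edge_eq hdisj h5 (row_fin _) (fin_row hl.symm))
  · have h6 : (g (k' + 1)).start = (g k).fin := by rw [hl, (hg k').1]
    have := edge_eq hdisj h5 (row_fin _) (start_row h6)
    rw [← this] at h6
    exact (start_ne_fin _ h6).elim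

/-- The bi-infinite path of edges going from bottom to top, completed by horizontal segments joining
matched edges, is a properly embedded line. -/
theorem exists_line (hodd : ∀ r, Odd (J r).card) (hdisj : ∀ r, Disjoint (J r) (J (r + 1)))
    (hY : StrictMono Y) (hYt : Filter.Tendsto Y Filter.atTop Filter.atTop)
    (hYb : Filter.Tendsto Y Filter.atBot Filter.atBot) :
    ∃ L : Set (ℝ × ℝ), IsProperLine L ∧
      (∀ K : Set ℝ, IsCompact K → IsCompact {z ∈ L | z.2 ∈ K}) ∧
      Prod.snd '' L = Set.univ ∧
      ∀ z ∈ L, (∃ r, z.1 ∈ J r ∧ z.2 ∈ Set.Icc (Y r) (Y (r + 1))) ∨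
        ∃ l p q, z.2 = Y l ∧ Matched (lev J l) p q ∧ z.1 ∈ Set.Icc p q := by
  obtain ⟨g, hinj, hg, hgt, hgb⟩ := comb hodd hdisj
  have hcont : Continuous fun s : ℝ => stepPath Y g ⌊s⌋ (Int.fract s) := by
    refine continuous_concat (fun k => ?_) fun k => ?_
    · unfold stepPath
      fun_prop
    · have h1 : max 0 (2 * (1 : ℝ) - 1) = 1 := by norm_num
      have h2 : min 1 (2 * (1 : ℝ)) = 1 := by norm_num
      have h3 : max 0 (2 * (0 : ℝ) - 1) = 0 := by norm_num
      have h4 : min 1 (2 * (0 : ℝ)) = 0 := by norm_num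
      simp only [stepPath, h1, h2, h3, h4]
      ext
      · simp
      · simp [(hg k).1]
  have hinj' : Function.Injective fun s : ℝ => stepPath Y g ⌊s⌋ (Int.fract s) := by
    intro s s' h
    simp only at h
    have hfr : ⌊s⌋ = ⌊s'⌋ → Int.fract s = Int.fract s' → s = s' := by
      intro h1 h2
      rw [← Int.floor_add_fract s, ← Int.floor_add_fract s', h1, h2]
    have e1 := congrArg Prod.fst h
    have e2 := congrArg Prod.snd h
    rcases stepPath_cases (k := ⌊s⌋) hg hY (Int.fract_nonneg s) (Int.fract_lt_one s) with
      ⟨a1, a2, a3, a4, a5⟩ | ⟨a1, a2, a3, a4⟩ <;>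
    rcases stepPath_cases (k := ⌊s'⌋) hg hY (Int.fract_nonneg s') (Int.fract_lt_one s') with
      ⟨b1, b2, b3, b4, b5⟩ | ⟨b1, b2, b3, b4⟩
    · have hk : ⌊s⌋ = ⌊s'⌋ :=
        step_vv hdisj hinj hY (a2.symm.trans (e1.trans b2)) a4 (e2 ▸ b4)
      refine hfr hk ?_
      rw [e2, b3, hk] at a3
      have hne : Y (g ⌊s'⌋).fin - Y (g ⌊s'⌋).start ≠ 0 :=
        sub_ne_zero.2 fun h => start_ne_fin _ (hY.injective h).symm
      have := mul_right_cancel₀ hne (add_left_cancel a3)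
      linarith
    · exact (step_vh hdisj hg hY a2 a4 a5 (e2.trans b1) (e1 ▸ b3) (e1 ▸ b4)).elim
    · exact (step_vh hdisj hg hY b2 b4 b5 (e2.symm.trans a1) (e1 ▸ a3) (e1 ▸ a4)).elim
    · have hk : ⌊s⌋ = ⌊s'⌋ :=
        step_hh hdisj hinj hg hY (a1.symm.trans (e2.trans b1)) a3 (e1 ▸ b3)
      refine hfr hk ?_
      rw [e1, b2, hk] at a2
      have hne : (g (⌊s'⌋ + 1)).1.2 - (g ⌊s'⌋).1.2 ≠ 0 :=
        sub_ne_zero.2 (hg ⌊s'⌋).2.1.symm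
      have := mul_right_cancel₀ hne (add_left_cancel a2)
      linarith
  -- the height of the path stays between the levels adjacent to the start of the current edge
  have hht : ∀ s : ℝ, Y ((g ⌊s⌋).start - 1) ≤ (stepPath Y g ⌊s⌋ (Int.fract s)).2 ∧
      (stepPath Y g ⌊s⌋ (Int.fract s)).2 ≤ Y ((g ⌊s⌋).start + 1) := by
    intro s
    rcases stepPath_cases (k := ⌊s⌋) hg hY (Int.fract_nonneg s) (Int.fract_lt_one s) with
      ⟨a1, a2, a3, a4, a5⟩ | ⟨a1, a2, a3, a4⟩
    · refine ⟨(hY.monotone ?_).trans a4.1, a4.2.trans (hY.monotone ?_)⟩ <;>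
        rcases (g ⌊s⌋).start_fin with h | h <;> omega
    · rw [a1]
      constructor <;> apply hY.monotone <;> rcases (g ⌊s⌋).start_fin with h | h <;> omega
  have htop : Filter.Tendsto (fun s : ℝ => (stepPath Y g ⌊s⌋ (Int.fract s)).2)
      Filter.atTop Filter.atTop :=
    Filter.tendsto_atTop_mono (fun s => (hht s).1) (hYt.comp
      ((Filter.tendsto_atTop_add_const_right _ (-1) hgt).comp tendsto_floor_atTop))
  have hbot : Filter.Tendsto (fun s : ℝ => (stepPath Y g ⌊s⌋ (Int.fract s)).2)
      Filter.atBot Filter.atBot :=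
    Filter.tendsto_atBot_mono (fun s => (hht s).2) (hYb.comp
      ((Filter.tendsto_atBot_add_const_right _ 1 hgb).comp tendsto_floor_atBot))
  obtain ⟨h1, h2, h3⟩ := line_of_curve hcont hinj' htop hbot
  refine ⟨_, h1, h2, h3, ?_⟩
  rintro _ ⟨s, rfl⟩
  rcases stepPath_cases (k := ⌊s⌋) hg hY (Int.fract_nonneg s) (Int.fract_lt_one s) with
    ⟨a1, a2, a3, a4, a5⟩ | ⟨a1, a2, a3, a4⟩
  · exact Or.inl ⟨(g ⌊s⌋).1.1, by rw [a2]; exact (g ⌊s⌋).2, a4⟩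
  · exact Or.inr ⟨(g ⌊s⌋).fin, _, _, a1, matched_step hg ⌊s⌋, a3⟩

end

/-! ### Fine brick decompositions -/

/-- Over a bounded range of heights, `P` and the complement of `U` are at positive distance: the part
of `P` which is not far to the right is compact. -/
lemma exists_fine {P U R : Set (ℝ × ℝ)} (hP : IsClosed P) (hU : IsOpen U)
    (hPU : P ⊆ U) (hUR : U ⊆ R) (hPf : FarR P) (hRf : FarL Rᶜ) (n : ℝ) :
    ∃ ε > 0, ∀ z ∈ P, ∀ z' : ℝ × ℝ, |z.2| ≤ n → |z'.2| ≤ n → |z.1 - z'.1| ≤ ε →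
      |z.2 - z'.2| ≤ ε → z' ∈ U := by
  obtain ⟨a, ha⟩ := hRf n
  obtain ⟨b, hb⟩ := hPf n
  have hK : IsCompact (P ∩ Set.Icc a (b + 1) ×ˢ Set.Icc (-n) n) :=
    (isCompact_Icc.prod isCompact_Icc).inter_left hP
  obtain ⟨ε, hε, hεU⟩ := hK.exists_cthickening_subset_open hU (Set.inter_subset_left.trans hPU)
  refine ⟨min ε 1, by positivity, fun z hz z' h1 h2 h3 h4 => ?_⟩
  by_cases hzb : z.1 ≤ b + 1
  · apply hεU
    refine Metric.mem_cthickening_of_dist_le z' z ε _ ⟨hz, ⟨?_, hzb⟩, abs_le.1 h1⟩ ?_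
    · by_contra h
      exact ha z h1 (not_le.1 h).le (hUR (hPU hz))
    · rw [dist_comm, Prod.dist_eq, Real.dist_eq, Real.dist_eq]
      exact max_le (h3.trans (min_le_left _ _)) (h4.trans (min_le_left _ _))
  · refine hPU (hb z' h2 ?_)
    have := (abs_le.1 (h3.trans (min_le_right _ _))).2
    linarith [not_le.1 hzb]

/-- A subdivision of the line whose parts are as small as prescribed over each bounded interval. -/
lemma exists_levels (ε : ℕ → ℝ) (hε : ∀ n, 0 < ε n) : ∃ (Y : ℤ → ℝ) (N : ℤ → ℕ),
    StrictMono Y ∧ Filter.Tendsto Y Filter.atTop Filter.atTop ∧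
      Filter.Tendsto Y Filter.atBot Filter.atBot ∧
      ∀ j, |Y j| ≤ N j ∧ |Y (j + 1)| ≤ N j ∧ Y (j + 1) - Y j ≤ ε (N j) := by
  let d : ℕ → ℝ := fun n => min 1 (ε n)
  have hd : ∀ n, 0 < d n := fun n => lt_min one_pos (hε n)
  let a : ℕ → ℝ := fun k => Nat.rec 0 (fun _ x => x + d (⌈x⌉₊ + 1)) k
  have ha0 : a 0 = 0 := rfl
  have ha : ∀ k, a (k + 1) = a k + d (⌈a k⌉₊ + 1) := fun k => rfl
  clear_value a
  have hmono : StrictMono a := strictMono_nat_of_lt_succ fun k => by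
    rw [ha]; linarith [hd (⌈a k⌉₊ + 1)]
  have hnn : ∀ k, 0 ≤ a k := fun k => ha0 ▸ hmono.monotone (Nat.zero_le k)
  have hunb : ∀ B, ∃ k, B ≤ a k := by
    by_contra! h
    obtain ⟨B, hB⟩ := h
    -- below `B` the increments are bounded away from zero
    obtain ⟨i, hi, hmin⟩ := (Finset.range (⌈B⌉₊ + 2)).exists_min_image d ⟨0, by simp⟩
    have hlow : ∀ k : ℕ, k * d i ≤ a k := by
      intro k
      induction k with
      | zero => simp [ha0]
      | succ k ih =>
        have h1 : ⌈a k⌉₊ ≤ ⌈B⌉₊ := Nat.ceil_mono (hB k).le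
        have h2 := hmin (⌈a k⌉₊ + 1) (Finset.mem_range.2 (by omega))
        rw [ha]
        push_cast
        linarith
    obtain ⟨k, hk⟩ := exists_nat_gt (B / d i)
    have h3 := hlow k
    have h4 := (div_lt_iff₀ (hd i)).1 hk
    linarith [hB k]
  let Y : ℤ → ℝ := fun j => if 0 ≤ j then a j.toNat else -a (-j).toNat
  have hY0 : ∀ k : ℕ, Y k = a k := fun k => by simp [Y]
  have hY1 : ∀ k : ℕ, Y (-k) = -a k := fun k => by
    rcases Nat.eq_zero_or_pos k with rfl | h
    · simp [Y, ha0]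
    · have : ¬ (0 : ℤ) ≤ -k := by omega
      simp only [Y, if_neg this, neg_neg, Int.toNat_natCast]
  have hrow : ∀ j, ∃ k : ℕ, (Y j = a k ∧ Y (j + 1) = a (k + 1)) ∨
      (Y j = -a (k + 1) ∧ Y (j + 1) = -a k) := by
    intro j
    rcases le_or_gt 0 j with h | h
    · refine ⟨j.toNat, Or.inl ⟨?_, ?_⟩⟩ <;>
        rw [← hY0] <;> congr 1 <;> push_cast <;> omega
    · refine ⟨(-j - 1).toNat, Or.inr ⟨?_, ?_⟩⟩ <;>
        rw [← hY1] <;> congr 1 <;> push_cast <;> omega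
  choose κ hκ using hrow
  have hYm : StrictMono Y := strictMono_int_of_lt_succ fun j => by
    have := hmono (Nat.lt_succ_self (κ j))
    rcases hκ j with h | h <;> rw [h.1, h.2]
    · exact this
    · exact neg_lt_neg this
  refine ⟨Y, fun j => ⌈a (κ j)⌉₊ + 1, hYm, ?_, ?_, fun j => ?_⟩
  · refine Filter.tendsto_atTop_atTop_of_monotone hYm.monotone fun b => ?_
    obtain ⟨k, hk⟩ := hunb b
    exact ⟨k, by rwa [hY0]⟩
  · refine Filter.tendsto_atBot_atBot_of_monotone hYm.monotone fun b => ?_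
    obtain ⟨k, hk⟩ := hunb (-b)
    exact ⟨-k, by rw [hY1]; linarith⟩
  · have h1 := ha (κ j)
    have h2 : d (⌈a (κ j)⌉₊ + 1) ≤ 1 := min_le_left _ _
    have h3 : d (⌈a (κ j)⌉₊ + 1) ≤ ε (⌈a (κ j)⌉₊ + 1) := min_le_right _ _
    have h4 := Nat.le_ceil (a (κ j))
    have h5 := hnn (κ j)
    have h6 := hnn (κ j + 1)
    have h7 : |a (κ j)| ≤ ((⌈a (κ j)⌉₊ + 1 : ℕ) : ℝ) := by
      rw [abs_of_nonneg h5]; push_cast; linarith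
    have h8 : |a (κ j + 1)| ≤ ((⌈a (κ j)⌉₊ + 1 : ℕ) : ℝ) := by
      rw [abs_of_nonneg h6]; push_cast; linarith
    rcases hκ j with h | h <;> rw [h.1, h.2]
    · exact ⟨h7, h8, by linarith⟩
    · rw [abs_neg, abs_neg]
      exact ⟨h8, h7, by linarith⟩

/-- A brick decomposition of the plane: horizontal rows bounded by the levels `Y j`, the row
number `j` being cut into rectangles at the abscissas `cut j m`. Consecutive rows have no common
cut, so that at most three rectangles meet at a point. -/
structure Brick (Y : ℤ → ℝ) (cut : ℤ → ℤ → ℝ) : Prop where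
  mono : StrictMono Y
  top : Filter.Tendsto Y Filter.atTop Filter.atTop
  bot : Filter.Tendsto Y Filter.atBot Filter.atBot
  cut_mono : ∀ j, StrictMono (cut j)
  cut_cover : ∀ j x, ∃ m, cut j m ≤ x ∧ x < cut j (m + 1)
  cut_ne : ∀ j m n, cut j m ≠ cut (j + 1) n

/-- Closed bricks. -/
def cbrick (Y : ℤ → ℝ) (cut : ℤ → ℤ → ℝ) (j m : ℤ) : Set (ℝ × ℝ) :=
  Set.Icc (cut j m) (cut j (m + 1)) ×ˢ Set.Icc (Y j) (Y (j + 1))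

/-- Open bricks. -/
def obrick (Y : ℤ → ℝ) (cut : ℤ → ℤ → ℝ) (j m : ℤ) : Set (ℝ × ℝ) :=
  Set.Ioo (cut j m) (cut j (m + 1)) ×ˢ Set.Ioo (Y j) (Y (j + 1))

/-- There is a brick decomposition so fine that the bricks meeting `P` lie in `U`. -/
lemma exists_brick {P U R : Set (ℝ × ℝ)} (hP : IsClosed P) (hU : IsOpen U)
    (hPU : P ⊆ U) (hUR : U ⊆ R) (hPf : FarR P) (hRf : FarL Rᶜ) : ∃ Y cut, Brick Y cut ∧
      ∀ j m, (cbrick Y cut j m ∩ P).Nonempty → cbrick Y cut j m ⊆ U := by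
  choose ε hε hfine using fun n : ℕ => exists_fine hP hU hPU hUR hPf hRf n
  obtain ⟨Y, N, hY, hYt, hYb, hN⟩ := exists_levels ε hε
  choose w hw using fun j => exists_nat_one_div_lt (hε (N j))
  -- shifting every other row by an irrational number separates the cuts
  let θ : ℤ → ℝ := fun j => if Even j then 0 else √2
  let cut : ℤ → ℤ → ℝ := fun j m => m * (1 / (w j + 1)) + θ j
  have hpos : ∀ j, (0 : ℝ) < 1 / (w j + 1) := fun j => by positivity
  refine ⟨Y, cut, ⟨hY, hYt, hYb, ?_, ?_, ?_⟩, ?_⟩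
  · intro j m m' h
    have : (m : ℝ) < m' := by exact_mod_cast h
    have := mul_lt_mul_of_pos_right this (hpos j)
    simp only [cut]
    linarith
  · intro j x
    refine ⟨⌊(x - θ j) / (1 / (w j + 1))⌋, ?_, ?_⟩
    · have := (le_div_iff₀ (hpos j)).1 (Int.floor_le ((x - θ j) / (1 / (w j + 1))))
      simp only [cut]
      linarith
    · have := (div_lt_iff₀ (hpos j)).1 (Int.lt_floor_add_one ((x - θ j) / (1 / (w j + 1))))
      simp only [cut]
      push_cast
      linarith
  · intro j m m' h
    have hirr : ∀ q : ℚ, (q : ℝ) ≠ √2 := fun q h => irrational_sqrt_two ⟨q, h⟩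
    simp only [cut, θ] at h
    by_cases hj : Even j
    · have hj' : ¬ Even (j + 1) := by grind
      rw [if_pos hj, if_neg hj'] at h
      refine hirr (m * (1 / (w j + 1)) - m' * (1 / (w (j + 1) + 1))) ?_
      push_cast
      linarith
    · have hj' : Even (j + 1) := by grind
      rw [if_neg hj, if_pos hj'] at h
      refine hirr (m' * (1 / (w (j + 1) + 1)) - m * (1 / (w j + 1))) ?_
      push_cast
      linarith
  · rintro j m ⟨z, ⟨hz1, hz2⟩, hzP⟩ z' ⟨hz1', hz2'⟩
    obtain ⟨h1, h2, h3⟩ := hN j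
    have habs : ∀ y ∈ Set.Icc (Y j) (Y (j + 1)), |y| ≤ N j := fun y hy =>
      abs_le.2 ⟨(abs_le.1 h1).1.trans hy.1, hy.2.trans (abs_le.1 h2).2⟩
    refine hfine (N j) z hzP z' (habs _ hz2) (habs _ hz2') ?_ ?_
    · have h4 : cut j (m + 1) - cut j m = 1 / (w j + 1) := by simp only [cut]; push_cast; ring
      have h5 := hw j
      rw [abs_le]
      constructor <;> linarith [hz1.1, hz1.2, hz1'.1, hz1'.2]
    · rw [abs_le]
      constructor <;> linarith [hz2'.1, hz2'.2, hz2.1, hz2.2]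

/-! ### A line on the boundary of a union of bricks -/

/-- A family of truth values on the integers which is true near `-∞` and false near `+∞` changes
an odd number of times; its value is given by the parity of the number of earlier changes. -/
lemma changes (k : ℤ → Prop) {A B : ℤ} (hA : ∀ m ≤ A, k m) (hB : ∀ m ≥ B, ¬ k m) :
    ∃ D : Finset ℤ, (∀ m, m ∈ D ↔ ¬ (k (m - 1) ↔ k m)) ∧ Odd D.card ∧
      ∀ m, k m ↔ Even (D.filter (· ≤ m)).card := by
  classical
  have hfin : {m | ¬ (k (m - 1) ↔ k m)}.Finite := by
    refine (Set.finite_Icc A (B + 1)).subset fun m hm => ?_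
    by_contra h
    rw [Set.mem_Icc, not_and_or, not_le, not_le] at h
    rcases h with h | h
    · exact hm (iff_of_true (hA _ (by omega)) (hA _ (by omega)))
    · exact hm (iff_of_false (hB _ (by omega)) (hB _ (by omega)))
  have hmem : ∀ m, m ∈ hfin.toFinset ↔ ¬ (k (m - 1) ↔ k m) := fun m => by simp
  set D := hfin.toFinset
  have hlow : ∀ m ≤ A, (k m ↔ Even (D.filter (· ≤ m)).card) := by
    intro m hm
    have : D.filter (· ≤ m) = ∅ := by
      refine Finset.filter_eq_empty_iff.2 fun d hd hdm => (hmem d).1 hd ?_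
      exact iff_of_true (hA _ (by omega)) (hA _ (by omega))
    simp [this, hA m hm]
  have hall : ∀ m, k m ↔ Even (D.filter (· ≤ m)).card := by
    intro m
    rcases le_total m A with hm | hm
    · exact hlow m hm
    · induction m, hm using Int.leInduction with
      | base => exact hlow A le_rfl
      | succ m hm ih =>
        have h1 : D.filter (· ≤ m + 1) = D.filter (· ≤ m) ∪ D.filter (· = m + 1) := by
          ext d
          simp only [Finset.mem_filter, Finset.mem_union, ← and_or_left]
          refine and_congr_right fun _ => ?_
          omega
        have h2 : (D.filter (· ≤ m + 1)).card =
            (D.filter (· ≤ m)).card + if m + 1 ∈ D then 1 else 0 := by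
          rw [h1, Finset.card_union_of_disjoint
            (Finset.disjoint_filter.2 fun d _ h3 h4 => by omega), Finset.filter_eq']
          split <;> simp
        have h3 := hmem (m + 1)
        rw [add_sub_cancel_right] at h3
        rw [h2]
        split_ifs with h4
        · rw [Nat.even_add_one, ← ih]
          have := h3.1 h4
          tauto
        · rw [add_zero, ← ih]
          have := mt h3.2 h4
          tauto
  refine ⟨D, hmem, ?_, hall⟩
  have h1 : D.filter (· ≤ B) = D := by
    refine Finset.filter_eq_self.2 fun d hd => ?_
    by_contra h
    exact (hmem d).1 hd (iff_of_false (hB _ (by omega)) (hB _ (by omega)))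
  have h2 := mt (hall B).2 (hB B le_rfl)
  rw [h1] at h2
  exact Nat.not_even_iff_odd.1 h2

section

variable {Y : ℤ → ℝ} {cut : ℤ → ℤ → ℝ}

lemma Brick.level_cover (hb : Brick Y cut) (y : ℝ) : ∃ j, Y j ≤ y ∧ y < Y (j + 1) := by
  obtain ⟨a, ha⟩ := (hb.bot.eventually (Filter.eventually_le_atBot y)).exists
  obtain ⟨b, hbb⟩ := (hb.top.eventually (Filter.eventually_gt_atTop y)).exists
  obtain ⟨j, h1, h2⟩ := Int.exists_greatest_of_bdd (P := fun j => Y j ≤ y)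
    ⟨b, fun z hz => (hb.mono.lt_iff_lt.1 (hz.trans_lt hbb)).le⟩ ⟨a, ha⟩
  refine ⟨j, h1, ?_⟩
  by_contra h
  have := h2 _ (not_lt.1 h)
  omega

lemma Brick.cover (hb : Brick Y cut) (z : ℝ × ℝ) : ∃ j m, z ∈ cbrick Y cut j m := by
  obtain ⟨j, h1, h2⟩ := hb.level_cover z.2
  obtain ⟨m, h3, h4⟩ := hb.cut_cover j z.1
  exact ⟨j, m, ⟨h3, h4.le⟩, h1, h2.le⟩

lemma Brick.eq_of_mem (hb : Brick Y cut) {j m j' m' : ℤ} {z : ℝ × ℝ} (h : z ∈ obrick Y cut j m)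
    (h' : z ∈ cbrick Y cut j' m') : j = j' ∧ m = m' := by
  obtain ⟨⟨h1, h2⟩, h3, h4⟩ := h
  obtain ⟨⟨h1', h2'⟩, h3', h4'⟩ := h'
  have e1 := hb.mono.lt_iff_lt.1 (h3.trans_le h4')
  have e2 := hb.mono.lt_iff_lt.1 (h3'.trans_lt h4)
  obtain rfl : j = j' := by omega
  have e3 := (hb.cut_mono j).lt_iff_lt.1 (h1.trans_le h2')
  have e4 := (hb.cut_mono j).lt_iff_lt.1 (h1'.trans_lt h2)
  exact ⟨rfl, by omega⟩

lemma isOpen_obrick (j m : ℤ) : IsOpen (obrick Y cut j m) := isOpen_Ioo.prod isOpen_Ioo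

lemma obrick_subset (j m : ℤ) : obrick Y cut j m ⊆ cbrick Y cut j m :=
  Set.prod_mono Set.Ioo_subset_Icc_self Set.Ioo_subset_Icc_self

lemma preconn_obrick (j m : ℤ) : IsPreconnected (obrick Y cut j m) :=
  isPreconnected_Ioo.prod isPreconnected_Ioo

lemma Brick.closure_obrick (hb : Brick Y cut) (j m : ℤ) :
    closure (obrick Y cut j m) = cbrick Y cut j m := by
  rw [obrick, closure_prod_eq, closure_Ioo (hb.cut_mono j (by omega)).ne,
    closure_Ioo (hb.mono (by omega)).ne, cbrick]

lemma Brick.nonempty_obrick (hb : Brick Y cut) (j m : ℤ) : (obrick Y cut j m).Nonempty :=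
  (Set.nonempty_Ioo.2 (hb.cut_mono j (by omega))).prod (Set.nonempty_Ioo.2 (hb.mono (by omega)))

/-- The component of the complement of `X` containing everything far to the left. -/
lemma exists_left_component {X : Set (ℝ × ℝ)} (hX : IsClosed X) (hXf : FarL Xᶜ) :
    ∃ G : Set (ℝ × ℝ), IsPreconnected G ∧ IsOpen G ∧ FarL G ∧ G ⊆ Xᶜ ∧
      ∀ C, IsPreconnected C → (C ∩ G).Nonempty → C ⊆ Xᶜ → C ⊆ G := by
  have hXf' := hXf
  choose c hc using hXf
  refine ⟨connectedComponentIn Xᶜ (c 0, 0), isPreconnected_connectedComponentIn,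
    hX.isOpen_compl.connectedComponentIn, ?_, connectedComponentIn_subset _ _, ?_⟩
  swap
  · rintro C hC ⟨w, hwC, hwG⟩ hCX
    rw [connectedComponentIn_eq hwG]
    exact hC.subset_connectedComponentIn hwC hCX
  intro n
  refine ⟨c n, fun z h1 h2 => ?_⟩
  have hn : 0 ≤ n := (abs_nonneg _).trans h1
  have h3 : (min (c 0) (c n), (0 : ℝ)) ∈ connectedComponentIn Xᶜ (c 0, 0) :=
    (convex_boxL 0 (c 0)).isPreconnected.subset_connectedComponentIn
      (by simp) (fun w hw => hc 0 w hw.1 hw.2) (by simp)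
  rw [connectedComponentIn_eq h3]
  exact (convex_boxL n (c n)).isPreconnected.subset_connectedComponentIn (by simp [hn])
    (fun w hw => hc n w hw.1 hw.2) ⟨h1, h2⟩

lemma Brick.row_bdd (j : ℤ) : ∃ n : ℝ, ∀ m, ∀ z ∈ cbrick Y cut j m, |z.2| ≤ n :=
  ⟨max |Y j| |Y (j + 1)|, fun _ z hz => abs_le_max_abs_abs hz.2.1 hz.2.2⟩

/-- Between a closed set `P`, which contains everything far to the right, and the complement of a
closed neighbourhood `R`, which contains everything far to the left, there is a properly embedded
vertical line `L`. It consists of boundary points of the left component `G` of the complement of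
the bricks meeting `P`. Along a row, cuts between a brick in `G` and a brick not in `G` are odd in
number, so `exists_line` applies to these cuts. -/
theorem core {P U R : Set (ℝ × ℝ)} (hP : IsClosed P) (hU : IsOpen U) (hR : IsClosed R)
    (hPU : P ⊆ U) (hUR : U ⊆ R) (hPf : FarR P) (hRf : FarL Rᶜ) :
    ∃ G L : Set (ℝ × ℝ), IsPreconnected G ∧ IsOpen G ∧ FarL G ∧ Disjoint G P ∧
      (∀ C, IsPreconnected C → (C ∩ G).Nonempty → C ⊆ Rᶜ → C ⊆ G) ∧
      IsProperLine L ∧ (∀ K : Set ℝ, IsCompact K → IsCompact {z ∈ L | z.2 ∈ K}) ∧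
      Prod.snd '' L = Set.univ ∧ L ⊆ closure G ∧ Disjoint L G := by
  obtain ⟨Y, cut, hb, hfine⟩ := exists_brick hP hU hPU hUR hPf hRf
  set X := closure (⋃ (j : ℤ) (m : ℤ) (_ : (cbrick Y cut j m ∩ P).Nonempty), cbrick Y cut j m)
    with hX
  have hcX : ∀ j m, (cbrick Y cut j m ∩ P).Nonempty → cbrick Y cut j m ⊆ X := fun j m h z hz =>
    subset_closure (Set.mem_iUnion.2 ⟨j, Set.mem_iUnion.2 ⟨m, Set.mem_iUnion.2 ⟨h, hz⟩⟩⟩)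
  have hPX : P ⊆ X := by
    intro z hz
    obtain ⟨j, m, h⟩ := hb.cover z
    exact hcX j m ⟨z, h, hz⟩ h
  have hXR : X ⊆ R := by
    refine closure_minimal ?_ hR
    simp only [Set.iUnion_subset_iff]
    exact fun j m h => (hfine j m h).trans hUR
  obtain ⟨G, hGc, hGo, hGL, hGX, hGmax⟩ := exists_left_component (X := X) isClosed_closure
    (hRf.mono (Set.compl_subset_compl.2 hXR))
  have hGP : Disjoint G P := Set.disjoint_left.2 fun z hzG hzP => hGX hzG (hPX hzP)
  -- each open brick is contained in `G` or disjoint from `G`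
  have hdich : ∀ j m, ¬ obrick Y cut j m ⊆ G → Disjoint (obrick Y cut j m) G := by
    intro j m hn
    by_cases h : (cbrick Y cut j m ∩ P).Nonempty
    · exact Set.disjoint_left.2 fun z hz hzG => hGX hzG (hcX j m h (obrick_subset j m hz))
    · by_contra hd
      refine hn (hGmax _ (preconn_obrick j m) (Set.not_disjoint_iff.1 hd) ?_)
      rw [Set.subset_compl_iff_disjoint_right]
      refine Disjoint.closure_right ?_ (isOpen_obrick j m)
      simp only [Set.disjoint_iUnion_right]
      intro j' m' hPjm
      refine Set.disjoint_left.2 fun z hz hz' => ?_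
      obtain ⟨rfl, rfl⟩ := hb.eq_of_mem hz hz'
      exact h hPjm
  -- a point common to two bricks of different colours is a boundary point of `G`
  have hbd : ∀ {j m j' m' : ℤ} {z : ℝ × ℝ}, z ∈ cbrick Y cut j m → z ∈ cbrick Y cut j' m' →
      ¬ (obrick Y cut j m ⊆ G ↔ obrick Y cut j' m' ⊆ G) → z ∈ closure G ∩ Gᶜ := by
    have : ∀ {j m j' m' : ℤ} {z : ℝ × ℝ}, z ∈ cbrick Y cut j m → z ∈ cbrick Y cut j' m' →
        obrick Y cut j m ⊆ G → ¬ obrick Y cut j' m' ⊆ G → z ∈ closure G ∩ Gᶜ := by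
      intro j m j' m' z hz hz' h h'
      rw [← hb.closure_obrick] at hz hz'
      exact ⟨closure_mono h hz, fun hzG =>
        ((hdich j' m' h').closure_left hGo).le_bot ⟨hz', hzG⟩⟩
    intro j m j' m' z hz hz' h
    by_cases h1 : obrick Y cut j m ⊆ G
    · exact this hz hz' h1 (by tauto)
    · exact this hz' hz (by tauto) h1
  have hA : ∀ j, ∃ A, ∀ m ≤ A, obrick Y cut j m ⊆ G := by
    intro j
    obtain ⟨n, hn⟩ := Brick.row_bdd (Y := Y) (cut := cut) j
    obtain ⟨c, hc⟩ := hGL n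
    obtain ⟨m₀, h1, h2⟩ := hb.cut_cover j c
    refine ⟨m₀ - 1, fun m hm z hz => hc z (hn m z (obrick_subset j m hz)) ?_⟩
    exact hz.1.2.le.trans (((hb.cut_mono j).monotone (by omega)).trans h1)
  have hB : ∀ j, ∃ B, ∀ m ≥ B, ¬ obrick Y cut j m ⊆ G := by
    intro j
    obtain ⟨n, hn⟩ := Brick.row_bdd (Y := Y) (cut := cut) j
    obtain ⟨c, hc⟩ := hPf n
    obtain ⟨m₀, h1, h2⟩ := hb.cut_cover j c
    refine ⟨m₀ + 1, fun m hm h => ?_⟩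
    obtain ⟨z, hz⟩ := hb.nonempty_obrick j m
    refine hGP.le_bot ⟨h hz, hc z (hn m z (obrick_subset j m hz)) ?_⟩
    exact h2.le.trans (((hb.cut_mono j).monotone hm).trans hz.1.1.le)
  choose A hA using hA
  choose B hB using hB
  choose D hDmem hDodd hDpar using fun j => changes (fun m => obrick Y cut j m ⊆ G) (hA j) (hB j)
  let J : ℤ → Finset ℝ := fun j => (D j).image (cut j)
  have hJmem : ∀ j x, x ∈ J j ↔ ∃ m ∈ D j, cut j m = x := fun j x => Finset.mem_image
  have hJodd : ∀ j, Odd (J j).card := by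
    intro j
    rw [Finset.card_image_of_injective _ (hb.cut_mono j).injective]
    exact hDodd j
  have hJdisj : ∀ j, Disjoint (J j) (J (j + 1)) := by
    intro j
    rw [Finset.disjoint_left]
    intro x h1 h2
    obtain ⟨m, -, h3⟩ := (hJmem _ _).1 h1
    obtain ⟨m', -, h4⟩ := (hJmem _ _).1 h2
    exact hb.cut_ne j m m' (h3.trans h4.symm)
  have hidx : ∀ j m x, x ∈ Set.Ioo (cut j m) (cut j (m + 1)) →
      (obrick Y cut j m ⊆ G ↔ Even (idx (J j) x)) := by
    intro j m x hx
    have : (J j).filter (· < x) = ((D j).filter (· ≤ m)).image (cut j) := by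
      ext y
      simp only [Finset.mem_filter, Finset.mem_image, hJmem]
      constructor
      · rintro ⟨⟨d, hd, rfl⟩, h⟩
        have := (hb.cut_mono j).lt_iff_lt.1 (h.trans hx.2)
        exact ⟨d, ⟨hd, by omega⟩, rfl⟩
      · rintro ⟨d, ⟨hd, h⟩, rfl⟩
        exact ⟨⟨d, hd, rfl⟩, ((hb.cut_mono j).monotone h).trans_lt hx.1⟩
    rw [idx, this, Finset.card_image_of_injective _ (hb.cut_mono j).injective]
    exact hDpar j m
  obtain ⟨L, hL, hLp, hLo, hLz⟩ := exists_line hJodd hJdisj hb.mono hb.top hb.bot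
  have hLG : L ⊆ closure G ∩ Gᶜ := by
    intro z hz
    rcases hLz z hz with ⟨j, h1, h2⟩ | ⟨l, p, q, h1, h2, h3⟩
    · obtain ⟨m, hm, hmz⟩ := (hJmem _ _).1 h1
      refine hbd (j := j) (m := m - 1) (j' := j) (m' := m) ⟨⟨?_, ?_⟩, h2⟩ ⟨⟨?_, ?_⟩, h2⟩
        ((hDmem j m).1 hm)
      · rw [← hmz]; exact (hb.cut_mono j).monotone (by omega)
      · rw [← hmz, sub_add_cancel]
      · rw [← hmz]
      · rw [← hmz]; exact (hb.cut_mono j).monotone (by omega)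
    · -- away from the cuts, the bricks above and below have different colours
      have hdis : Disjoint (J (l - 1)) (J l) := by
        have := hJdisj (l - 1)
        rwa [sub_add_cancel] at this
      set E : Set ℝ := Set.range (cut (l - 1)) ∪ Set.range (cut l) with hE
      have hEd : Dense Eᶜ := ((Set.countable_range _).union (Set.countable_range _)).dense_compl ℝ
      have hgood : ∀ x ∈ Set.Ioo p q ∩ Eᶜ, (x, Y l) ∈ closure G ∩ Gᶜ := by
        rintro x ⟨hx, hxE⟩
        have hcell : ∀ j, x ∉ Set.range (cut j) → ∃ m, x ∈ Set.Ioo (cut j m) (cut j (m + 1)) := by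
          intro j hj
          obtain ⟨m, h4, h5⟩ := hb.cut_cover j x
          exact ⟨m, lt_of_le_of_ne h4 fun h => hj ⟨m, h⟩, h5⟩
        obtain ⟨m, hm⟩ := hcell (l - 1) fun h => hxE (Or.inl h)
        obtain ⟨m', hm'⟩ := hcell l fun h => hxE (Or.inr h)
        refine hbd (j := l - 1) (m := m) (j' := l) (m' := m')
          ⟨Set.Ioo_subset_Icc_self hm, ?_, ?_⟩ ⟨Set.Ioo_subset_Icc_self hm', ?_, ?_⟩ ?_
        · exact hb.mono.monotone (by omega)
        · simp
        · exact le_rfl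
        · exact hb.mono.monotone (by omega)
        · rw [hidx _ _ _ hm, hidx _ _ _ hm']
          obtain ⟨hp, hq, he, hs⟩ := h2
          have h4 := idx_lt hp hx.1
          have h5 := idx_mono (lev J l) hx.2.le
          have h6 : idx (lev J l) x = idx (lev J l) p + 1 := by omega
          have h7 : Odd (idx (J (l - 1)) x + idx (J l) x) := by
            rw [← idx_union hdis]
            have : Odd (idx (lev J l) x) := by rw [h6]; exact he.add_one
            exact this
          rw [Nat.odd_add', ← Nat.not_even_iff_odd] at h7
          tauto
      have hclosed : IsClosed {x : ℝ | (x, Y l) ∈ closure G ∩ Gᶜ} :=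
        (isClosed_closure.inter hGo.isClosed_compl).preimage (by fun_prop)
      have hpq : p < q := by
        by_contra h
        have := idx_mono (lev J l) (not_lt.1 h)
        have := h2.2.2.2
        omega
      have h4 : closure (Set.Ioo p q) ⊆ {x : ℝ | (x, Y l) ∈ closure G ∩ Gᶜ} :=
        closure_minimal ((hEd.open_subset_closure_inter isOpen_Ioo).trans
          (closure_minimal hgood hclosed)) hclosed
      rw [closure_Ioo hpq.ne] at h4
      have h5 := h4 h3
      have : z = (z.1, Y l) := Prod.ext rfl h1
      rw [this]
      exact h5
  exact ⟨G, L, hGc, hGo, hGL, hGP, fun C h1 h2 h3 =>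
    hGmax C h1 h2 (h3.trans (Set.compl_subset_compl.2 hXR)), hL, hLp, hLo,
    fun z hz => (hLG hz).1, Set.disjoint_left.2 fun z hz => (hLG hz).2⟩

end

/-! ### The attracting function and the new Brouwer line -/

/-- The unit horizontal translation. -/
def trans1 : Homeomorph (ℝ × ℝ) (ℝ × ℝ) where
  toFun z := (z.1 + 1, z.2)
  invFun z := (z.1 - 1, z.2)
  left_inv z := by simp
  right_inv z := by simp
  continuous_toFun := by fun_prop
  continuous_invFun := by fun_prop

lemma trans1_apply (z : ℝ × ℝ) : trans1 z = (z.1 + 1, z.2) := rfl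
lemma trans1_symm_apply (z : ℝ × ℝ) : trans1.symm z = (z.1 - 1, z.2) := rfl

/-- Over a bounded range of heights, a continuous map commuting with the unit translation
displaces points by a bounded amount. -/
lemma disp_bdd {f : ℝ × ℝ → ℝ × ℝ} (hf : Continuous f) (hc : ∀ z, f (trans1 z) = trans1 (f z))
    (n : ℝ) : ∃ C, ∀ z : ℝ × ℝ, |z.2| ≤ n → |(f z).1 - z.1| ≤ C ∧ |(f z).2| ≤ C := by
  have hK : IsCompact ((fun z : ℝ × ℝ => f z - (z.1, 0)) '' (Set.Icc (0 : ℝ) 1 ×ˢ Set.Icc (-n) n)) :=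
    (isCompact_Icc.prod isCompact_Icc).image (by fun_prop)
  obtain ⟨C, hC⟩ := hK.isBounded.exists_norm_le
  refine ⟨C, ?_⟩
  rintro ⟨x, y⟩ hy
  have hper : Function.Periodic (fun x => f (x, y) - (x, 0)) 1 := by
    intro x
    have := hc (x, y)
    rw [trans1_apply, trans1_apply] at this
    simp only at this
    simp only [this]
    ext <;> simp
  obtain ⟨x', hx', he⟩ := hper.exists_mem_Ico₀ one_pos x
  have h1 := hC _ ⟨(x', y), ⟨⟨hx'.1, hx'.2.le⟩, abs_le.1 hy⟩, rfl⟩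
  simp only at h1 he
  rw [← he] at h1
  have h2 := norm_fst_le (f (x, y) - (x, 0))
  have h3 := norm_snd_le (f (x, y) - (x, 0))
  simp only [Prod.fst_sub, Prod.snd_sub, sub_zero, Real.norm_eq_abs] at h2 h3
  exact ⟨h2.trans h1, h3.trans h1⟩

lemma FarL.preimage {S : Set (ℝ × ℝ)} (hS : FarL S) {f : ℝ × ℝ → ℝ × ℝ} (hf : Continuous f)
    (hc : ∀ z, f (trans1 z) = trans1 (f z)) : FarL (f ⁻¹' S) := fun n => by
  obtain ⟨C, hC⟩ := disp_bdd hf hc n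
  obtain ⟨c, hc⟩ := hS C
  refine ⟨c - C, fun z h1 h2 => hc _ (hC z h1).2 ?_⟩
  have := (abs_le.1 (hC z h1).1).2
  linarith

lemma FarR.preimage {S : Set (ℝ × ℝ)} (hS : FarR S) {f : ℝ × ℝ → ℝ × ℝ} (hf : Continuous f)
    (hc : ∀ z, f (trans1 z) = trans1 (f z)) : FarR (f ⁻¹' S) := fun n => by
  obtain ⟨C, hC⟩ := disp_bdd hf hc n
  obtain ⟨c, hc⟩ := hS C
  refine ⟨c + C, fun z h1 h2 => hc _ (hC z h1).2 ?_⟩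
  have := (abs_le.1 (hC z h1).1).1
  linarith

lemma symm_comm {h : Homeomorph (ℝ × ℝ) (ℝ × ℝ)} (hc : ∀ z, h (trans1 z) = trans1 (h z))
    (z : ℝ × ℝ) : h.symm (trans1 z) = trans1 (h.symm z) := by
  rw [h.symm_apply_eq, hc, h.apply_symm_apply]

lemma vert_of_line {L : Set (ℝ × ℝ)} (hL : IsProperLine L)
    (hproper : ∀ K : Set ℝ, IsCompact K → IsCompact {z ∈ L | z.2 ∈ K})
    (honto : Prod.snd '' L = Set.univ) : Vert L := by
  obtain ⟨γ, hγ, -, hpr, rfl⟩ := hL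
  refine ⟨?_, ⟨γ, hγ, rfl⟩, ?_, honto⟩
  · exact (isProperMap_iff_tendsto_cocompact.2 ⟨hγ, hpr⟩).isClosedMap.isClosed_range
  · intro n
    obtain ⟨c, hc⟩ := (hproper (Set.Icc (-n) n) isCompact_Icc).isBounded.exists_norm_le
    refine ⟨c + 1, fun w hw h1 => ?_⟩
    have h2 := hc w ⟨hw, abs_le.1 h1⟩
    have h3 := norm_fst_le w
    rw [Real.norm_eq_abs] at h3
    linarith

/-- The left side `G` of `L`: it is open, and both `h⁻¹` and the backward translation push it into
itself, the former together with its closure. -/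
lemma exists_left {h : Homeomorph (ℝ × ℝ) (ℝ × ℝ)} (hc : ∀ z, h (trans1 z) = trans1 (h z))
    {L : Set (ℝ × ℝ)} (hV : Vert L) (hfree : L ∩ h '' L = ∅) {p : ℝ × ℝ} (hp : p ∈ h '' L)
    (htL : trans1 '' L ⊆ closure (connectedComponentIn Lᶜ p)) :
    ∃ G : Set (ℝ × ℝ), IsOpen G ∧ FarL G ∧ FarR (closure G)ᶜ ∧
      (∀ z ∈ closure G, h.symm z ∈ G) ∧ (∀ z ∈ G, trans1.symm z ∈ G) := by
  set D := connectedComponentIn Lᶜ p with hD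
  have hLo : IsOpen Lᶜ := hV.closed.isOpen_compl
  have hDo : IsOpen D := hLo.connectedComponentIn
  -- the right of `L` lies in `D`, as it contains a translate of the rightmost point of a slice
  have hRD : rightOf L ⊆ D := by
    obtain ⟨q, hq, hqr⟩ := hV.exists_rightmost
    have h1 : trans1 q ∈ rightOf L := hqr _ rfl (by simp [trans1_apply])
    have h2 : trans1 q ∈ connectedComponentIn Lᶜ (trans1 q) :=
      mem_connectedComponentIn (Vert.rightOf_subset L h1)
    obtain ⟨w, hw1, hw2⟩ := mem_closure_iff.1 (htL ⟨q, hq, rfl⟩) _ hLo.connectedComponentIn h2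
    rw [hD, connectedComponentIn_eq hw2, ← connectedComponentIn_eq hw1]
    exact hV.preconn_rightOf.subset_connectedComponentIn h1 (Vert.rightOf_subset L)
  have hhL : h '' L ⊆ D := (hV.preconn.image _ h.continuous.continuousOn).subset_connectedComponentIn
    hp (fun z hz hzL => by
      have : z ∈ L ∩ h '' L := ⟨hzL, hz⟩
      rw [hfree] at this; exact this)
  obtain ⟨z₀, hz₀⟩ := hV.farL.nonempty
  obtain ⟨r, hr⟩ := hV.farR.nonempty
  set G := connectedComponentIn Lᶜ z₀ with hG
  have hGo : IsOpen G := hLo.connectedComponentIn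
  have hLG : leftOf L ⊆ G :=
    hV.preconn_leftOf.subset_connectedComponentIn hz₀ (Vert.leftOf_subset L)
  have hDG : Disjoint D G := by
    rw [Set.disjoint_left]
    intro z hzD hzG
    have h1 := connectedComponentIn_eq hzD
    have h2 := connectedComponentIn_eq hzG
    have h3 : G = D := by rw [hG, hD, h1, h2]
    exact hV.sep isPreconnected_connectedComponentIn (connectedComponentIn_subset _ _)
      (hLG hz₀) (x := z₀) (y := r) (by rw [← hG, h3]; exact hRD hr) hz₀ hr
  have hGfar : FarL G := hV.farL.mono hLG
  have hGmax : ∀ C, IsPreconnected C → C ⊆ Lᶜ → (C ∩ G).Nonempty → C ⊆ G := by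
    rintro C hC hCL ⟨w, hwC, hwG⟩
    rw [hG, connectedComponentIn_eq hwG]
    exact hC.subset_connectedComponentIn hwC hCL
  have hclG : Disjoint D (closure G) := hDG.closure_right hDo
  have hclG2 : closure G ⊆ G ∪ L := by
    intro z hz
    by_cases hzL : z ∈ L
    · exact Or.inr hzL
    · left
      have h2 : z ∈ connectedComponentIn Lᶜ z := mem_connectedComponentIn hzL
      obtain ⟨w, hw1, hw2⟩ := mem_closure_iff.1 hz _ hLo.connectedComponentIn h2
      rw [hG, connectedComponentIn_eq hw2, ← connectedComponentIn_eq hw1]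
      exact h2
  refine ⟨G, hGo, hGfar, (hV.farR.mono hRD).mono hclG.subset_compl_right, ?_, ?_⟩
  · have hsub : h.symm '' closure G ⊆ Lᶜ := by
      rintro _ ⟨z, hz, rfl⟩ hzL
      exact hclG.le_bot ⟨hhL ⟨_, hzL, h.apply_symm_apply z⟩, hz⟩
    have hpre : IsPreconnected (h.symm '' closure G) :=
      isPreconnected_connectedComponentIn.closure.image _ h.symm.continuous.continuousOn
    obtain ⟨w, hw1, hw2⟩ :=
      (hGfar.inter (hGfar.preimage h.symm.continuous (symm_comm hc))).nonempty
    intro z hz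
    exact hGmax _ hpre hsub ⟨h.symm w, ⟨w, subset_closure hw1, rfl⟩, hw2⟩ ⟨z, hz, rfl⟩
  · have hsub : trans1.symm '' G ⊆ Lᶜ := by
      rintro _ ⟨z, hz, rfl⟩ hzL
      have := htL ⟨_, hzL, trans1.apply_symm_apply z⟩
      exact (hDG.closure_left hGo).le_bot ⟨this, hz⟩
    have hpre : IsPreconnected (trans1.symm '' G) :=
      isPreconnected_connectedComponentIn.image _ trans1.symm.continuous.continuousOn
    obtain ⟨w, hw1, hw2⟩ :=
      (hGfar.inter (hGfar.preimage trans1.symm.continuous (symm_comm fun _ => rfl))).nonempty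
    intro z hz
    exact hGmax _ hpre hsub ⟨trans1.symm w, ⟨w, hw1, rfl⟩, hw2⟩ ⟨z, hz, rfl⟩

lemma isometry_trans1 : Isometry trans1 := by
  have : (trans1 : ℝ × ℝ → ℝ × ℝ) = fun z => z + (1, 0) := by
    funext z; rw [trans1_apply]; ext <;> simp
  rw [this]
  exact isometry_add_right _

/-- A set invariant under the backward translation recedes along forward orbits. -/
lemma infDist_trans1_le {W : Set (ℝ × ℝ)} (hW : W.Nonempty) (hWt : ∀ w ∈ W, trans1.symm w ∈ W)
    (z : ℝ × ℝ) : Metric.infDist z W ≤ Metric.infDist (trans1 z) W := by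
  have h1 : W ⊆ trans1 '' W := fun w hw => ⟨trans1.symm w, hWt w hw, trans1.apply_symm_apply w⟩
  have h2 := Metric.infDist_le_infDist_of_subset h1 hW (x := trans1 z)
  rwa [Metric.infDist_image isometry_trans1] at h2

/-- A set invariant under the forward translation comes closer along forward orbits. -/
lemma infDist_trans1_le' {W : Set (ℝ × ℝ)} (hW : W.Nonempty) (hWt : ∀ w ∈ W, trans1 w ∈ W)
    (z : ℝ × ℝ) : Metric.infDist (trans1 z) W ≤ Metric.infDist z W := by
  have h1 : trans1 '' W ⊆ W := by rintro _ ⟨w, hw, rfl⟩; exact hWt w hw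
  have h2 := Metric.infDist_le_infDist_of_subset h1 (hW.image _) (x := trans1 z)
  rwa [Metric.infDist_image isometry_trans1] at h2

/-- A continuous function whose superlevel set `{0 ≤ ψ}` is strictly attracting both for `h` and
for the translation. It compares the distance to `X`, the complement of `G`, with the distance to
the complement of `V = h⁻¹ ((closure G)ᶜ) ⊇ X`. Both sets are only weakly attracting for the
translation; the increasing factor `exp x` makes the inequality strict. -/
lemma exists_lyapunov {h : Homeomorph (ℝ × ℝ) (ℝ × ℝ)} (hc : ∀ z, h (trans1 z) = trans1 (h z))
    {G : Set (ℝ × ℝ)} (hG : IsOpen G) (hGL : FarL G) (hGR : FarR (closure G)ᶜ)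
    (hh : ∀ z ∈ closure G, h.symm z ∈ G) (ht : ∀ z ∈ G, trans1.symm z ∈ G) :
    ∃ ψ : ℝ × ℝ → ℝ, Continuous ψ ∧ (∀ z, 0 ≤ ψ z → 0 < ψ (h z)) ∧
      (∀ z, 0 ≤ ψ z → 0 < ψ (trans1 z)) ∧ FarR {z | 0 ≤ ψ z} ∧ FarL {z | ψ z < 0} := by
  set X := Gᶜ with hX
  set V := h ⁻¹' (closure G)ᶜ with hV
  have hXV : X ⊆ V := by
    intro z hz hz'
    have := hh _ hz'
    rw [h.symm_apply_apply] at this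
    exact hz this
  have hXc : IsClosed X := hG.isClosed_compl
  have hVc : IsClosed Vᶜ := (isClosed_closure.isOpen_compl.preimage h.continuous).isClosed_compl
  have hXn : X.Nonempty := (hGR.mono (Set.compl_subset_compl.2 subset_closure)).nonempty
  have hVfar : FarL Vᶜ := (hGL.preimage h.continuous hc).mono fun z hz hz' => hz' (subset_closure hz)
  have hVn : Vᶜ.Nonempty := hVfar.nonempty
  let ψ : ℝ × ℝ → ℝ := fun z => Real.exp z.1 * Metric.infDist z Vᶜ - Metric.infDist z X
  have hψ : Continuous ψ := by
    have h1 := Metric.continuous_infDist_pt X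
    have h2 := Metric.continuous_infDist_pt Vᶜ
    exact ((Real.continuous_exp.comp continuous_fst).mul h2).sub h1
  have hb : ∀ z ∈ V, 0 < Metric.infDist z Vᶜ := fun z hz =>
    (hVc.notMem_iff_infDist_pos hVn).1 (by simpa using hz)
  have ha : ∀ z ∉ X, 0 < Metric.infDist z X := fun z hz => (hXc.notMem_iff_infDist_pos hXn).1 hz
  have hneg : ∀ z ∉ V, ψ z < 0 := by
    intro z hz
    have h1 := ha z (fun h => hz (hXV h))
    have h2 : Metric.infDist z Vᶜ = 0 := Metric.infDist_zero_of_mem hz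
    simp only [ψ, h2]
    linarith
  have hpos : ∀ z ∈ X, 0 < ψ z := by
    intro z hz
    have h1 := hb z (hXV hz)
    have h2 : Metric.infDist z X = 0 := Metric.infDist_zero_of_mem hz
    simp only [ψ, h2]
    have := mul_pos (Real.exp_pos z.1) h1
    linarith
  have hmem : ∀ z, 0 ≤ ψ z → z ∈ V := by
    intro z hz
    by_contra h
    exact absurd (hneg z h) (not_lt.2 hz)
  -- the closure of `G` is also pushed into itself by the backward translation
  have hGt : ∀ v ∈ closure G, trans1.symm v ∈ closure G := fun v hv =>
    closure_mono (by rintro _ ⟨z, hz, rfl⟩; exact ht z hz)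
      (image_closure_subset_closure_image trans1.symm.continuous ⟨v, hv, rfl⟩)
  have hVt : ∀ w ∈ Vᶜ, trans1.symm w ∈ Vᶜ := by
    intro w hw
    have hw2 : h w ∈ closure G := not_not.1 hw
    have h5 : h (trans1.symm w) = trans1.symm (h w) := by
      rw [Homeomorph.eq_symm_apply, ← hc, trans1.apply_symm_apply]
    have h6 : h (trans1.symm w) ∈ closure G := by
      rw [h5]
      exact hGt _ hw2
    exact not_not.2 h6
  have hVG : ∀ z ∈ V, h z ∉ closure G := fun z hz => hz
  clear_value V
  refine ⟨ψ, hψ, ?_, ?_, ?_, hVfar.mono hneg⟩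
  · intro z hz
    exact hpos _ fun h' => hVG z (hmem z hz) (subset_closure h')
  · intro z hz
    have h1 : Metric.infDist (trans1 z) X ≤ Metric.infDist z X := by
      refine infDist_trans1_le' hXn (fun w hw hw' => ?_) z
      have := ht _ hw'
      rw [trans1.symm_apply_apply] at this
      exact hw this
    have h2 : Metric.infDist z Vᶜ ≤ Metric.infDist (trans1 z) Vᶜ :=
      infDist_trans1_le hVn hVt z
    have h3 := hb z (hmem z hz)
    have h4 : Real.exp z.1 < Real.exp (trans1 z).1 := Real.exp_lt_exp.2 (by simp [trans1_apply])
    have h5 : Real.exp z.1 * Metric.infDist z Vᶜ <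
        Real.exp (trans1 z).1 * Metric.infDist (trans1 z) Vᶜ :=
      mul_lt_mul h4 h2 h3 (Real.exp_pos _).le
    simp only [ψ] at hz ⊢
    linarith
  · exact hGR.mono fun z hz => (hpos z fun h => hz (subset_closure h)).le

/-- Sublemma 4.4: if a Brouwer line L of h (a Brouwer homeomorphism commuting with
the unit horizontal translation t) projects properly and onto the y-axis and
satisfies t(L) ⊆ closure D(L), then there is such a Brouwer line L' with
t(L') ⊆ D(L'). -/
theorem stmt19 (h : Homeomorph (ℝ × ℝ) (ℝ × ℝ))
    (hfree : ∀ z : ℝ × ℝ, h z ≠ z) (hor : IsotopicToId ⇑h)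
    (hcomm : ∀ z : ℝ × ℝ, h (z.1 + 1, z.2) = ((h z).1 + 1, (h z).2))
    (L : Set (ℝ × ℝ)) (hL : IsBrouwerLine h L)
    (hproper : ∀ K : Set ℝ, IsCompact K → IsCompact {z ∈ L | z.2 ∈ K})
    (honto : Prod.snd '' L = Set.univ)
    (D : Set (ℝ × ℝ)) (p : ℝ × ℝ) (hp : p ∈ ⇑h '' L)
    (hDdef : D = connectedComponentIn Lᶜ p)
    (htL : (fun z : ℝ × ℝ => (z.1 + 1, z.2)) '' L ⊆ closure D) :
    ∃ L' : Set (ℝ × ℝ), IsBrouwerLine h L' ∧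
      (∀ K : Set ℝ, IsCompact K → IsCompact {z ∈ L' | z.2 ∈ K}) ∧
      Prod.snd '' L' = Set.univ ∧
      ∃ p' ∈ ⇑h '' L',
        (fun z : ℝ × ℝ => (z.1 + 1, z.2)) '' L' ⊆ connectedComponentIn L'ᶜ p' := by
  have hc : ∀ z, h (trans1 z) = trans1 (h z) := hcomm
  have hV := vert_of_line hL.1 hproper honto
  obtain ⟨G₀, hG₀, hG₀L, hG₀R, hG₀h, hG₀t⟩ := exists_left hc hV hL.2.1 hp (hDdef ▸ htL)
  obtain ⟨ψ, hψ, hψh, hψt, hψR, hψL⟩ := exists_lyapunov hc hG₀ hG₀L hG₀R hG₀h hG₀t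
  have hPc : IsClosed {z | 0 ≤ ψ z} := isClosed_le continuous_const hψ
  have hQo : IsOpen {z | 0 < ψ (h z) ∧ 0 < ψ (trans1 z)} :=
    (isOpen_lt continuous_const (hψ.comp h.continuous)).inter
      (isOpen_lt continuous_const (hψ.comp trans1.continuous))
  obtain ⟨U, hU, hPU, hUQ⟩ := normal_exists_closure_subset hPc hQo
    (fun z hz => ⟨hψh z hz, hψt z hz⟩)
  have hRfar : FarL (closure U)ᶜ := (hψL.preimage h.continuous hc).mono
    fun z hz hz' => lt_asymm hz (hUQ hz').1
  obtain ⟨G, L', hGc, hGo, hGL, hGP, hGmax, hline, hproper', honto', hL'G, hL'dG⟩ :=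
    core hPc hU isClosed_closure hPU subset_closure hψR hRfar
  have hV' := vert_of_line hline hproper' honto'
  have hclG : ∀ z ∈ closure G, ψ z ≤ 0 := by
    have : closure G ⊆ {z | ψ z ≤ 0} := closure_minimal
      (fun z hz => by
        show ψ z ≤ 0
        exact (not_le.1 fun h' => hGP.le_bot ⟨hz, h'⟩).le) (isClosed_le hψ continuous_const)
    exact this
  -- as `f` maps `R = closure U` into `{0 < ψ}`, while `closure G` lies in `{ψ ≤ 0}`, the connected
  -- set `f⁻¹ (closure G)` misses `R`, so it is absorbed by `G`
  have push : ∀ f : Homeomorph (ℝ × ℝ) (ℝ × ℝ), (∀ z, f (trans1 z) = trans1 (f z)) →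
      (∀ z ∈ closure U, 0 < ψ (f z)) → ∀ z ∈ closure G, f.symm z ∈ G := by
    intro f hf hfU z hz
    have hpre : IsPreconnected (f.symm '' closure G) :=
      hGc.closure.image _ f.symm.continuous.continuousOn
    obtain ⟨w, hw1, hw2⟩ := (hGL.inter (hGL.preimage f.symm.continuous (symm_comm hf))).nonempty
    refine hGmax _ hpre ⟨f.symm w, ⟨w, subset_closure hw1, rfl⟩, hw2⟩ ?_ ⟨z, hz, rfl⟩
    rintro _ ⟨v, hv, rfl⟩ hv'
    have := hfU _ hv'
    rw [f.apply_symm_apply] at this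
    exact absurd (hclG v hv) (not_le.2 this)
  have hpushh := push h hc fun z hz => (hUQ hz).1
  have hpusht := push trans1 (fun _ => rfl) fun z hz => (hUQ hz).2
  have hGL' : G ⊆ L'ᶜ := hL'dG.subset_compl_left
  -- a point outside `G` is mapped off `L'`
  have hoff : ∀ f : Homeomorph (ℝ × ℝ) (ℝ × ℝ), (∀ z ∈ closure G, f.symm z ∈ G) →
      ∀ z ∉ G, f z ∈ L'ᶜ := by
    intro f hf z hz hz'
    have := hf _ (hL'G hz')
    rw [f.symm_apply_apply] at this
    exact hz this
  have hL'nG : ∀ z ∈ L', z ∉ G := fun z hz hz' => hL'dG.le_bot ⟨hz, hz'⟩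
  have hhL' : h '' L' ⊆ L'ᶜ := by
    rintro _ ⟨z, hz, rfl⟩; exact hoff h hpushh z (hL'nG z hz)
  have htL' : trans1 '' L' ⊆ L'ᶜ := by
    rintro _ ⟨z, hz, rfl⟩; exact hoff trans1 hpusht z (hL'nG z hz)
  obtain ⟨l, hlG, hl⟩ := (hGL.inter hV'.farL).nonempty
  obtain ⟨q, hq, hqr⟩ := hV'.exists_rightmost
  have hZG : ∀ z : ℝ × ℝ, z.2 = q.2 → q.1 ≤ z.1 → z ∉ G := by
    intro z h1 h2 hz
    rcases h2.eq_or_lt with h2 | h2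
    · have : z = q := Prod.ext h2.symm h1
      exact hL'nG q hq (this ▸ hz)
    · exact hV'.sep hGc hGL' hlG hz hl (hqr z h1 h2)
  -- the image of the ray to the right of `q` joins `h q` to the right of `L'`
  have hray : IsPreconnected (h '' {z | z.2 = q.2 ∧ q.1 ≤ z.1}) :=
    (convex_rayR q).isPreconnected.image _ h.continuous.continuousOn
  have hrayL : h '' {z | z.2 = q.2 ∧ q.1 ≤ z.1} ⊆ L'ᶜ := by
    rintro _ ⟨z, hz, rfl⟩; exact hoff h hpushh z (hZG z hz.1 hz.2)
  obtain ⟨c, hcr⟩ := (hV'.farR.preimage h.continuous hc) |q.2|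
  have hr : h (max c q.1, q.2) ∈ rightOf L' := hcr _ le_rfl (le_max_left _ _)
  set W := connectedComponentIn L'ᶜ (h q) with hW
  have hqW : h q ∈ W := mem_connectedComponentIn (hhL' ⟨q, hq, rfl⟩)
  have hrW : h (max c q.1, q.2) ∈ W :=
    hray.subset_connectedComponentIn (x := h q) ⟨q, ⟨rfl, le_rfl⟩, rfl⟩ hrayL
      ⟨(max c q.1, q.2), ⟨rfl, le_max_right _ _⟩, rfl⟩
  have hrightW : rightOf L' ⊆ W := by
    rw [hW, connectedComponentIn_eq hrW]
    exact hV'.preconn_rightOf.subset_connectedComponentIn hr (Vert.rightOf_subset L')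
  have hhW : h '' L' ⊆ W := (hV'.preconn.image _ h.continuous.continuousOn).subset_connectedComponentIn
    ⟨q, hq, rfl⟩ hhL'
  have htqW : trans1 q ∈ W := hrightW (hqr _ rfl (by simp [trans1_apply]))
  refine ⟨L', ⟨hline, ?_, ?_⟩, hproper', hV'.onto, h q, ⟨q, hq, rfl⟩, ?_⟩
  · rw [← Set.disjoint_iff_inter_eq_empty, Set.disjoint_right]
    exact fun _ hz => hhL' hz
  · rintro x hx _ ⟨y, hy, rfl⟩ heq
    rw [← connectedComponentIn_eq (hhW hx)] at heq
    have hyG : h.symm y ∈ G := hpushh y (hL'G hy)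
    have hlW : l ∈ W := by
      rw [hW, heq]; exact hGc.subset_connectedComponentIn hyG hGL' hlG
    exact hV'.sep isPreconnected_connectedComponentIn (connectedComponentIn_subset _ _) hlW hrW hl hr
  · change trans1 '' L' ⊆ W
    rw [hW, connectedComponentIn_eq htqW]
    exact (hV'.preconn.image _ trans1.continuous.continuousOn).subset_connectedComponentIn
      ⟨q, hq, rfl⟩ htL'
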